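/- arXiv:1802.08353 — 3 statements merged into one kernel-verified Lean document; each statement's English description precedes it below -/
import Mathlib

section
/- Let D be a *-IRKT. Then D is an AGCD domain if and only if for every *-super homogeneous ideal A of D there is a positive integer n such that (Aⁿ)* is a principal ideal. -/
open scoped nonZeroDivisors

/-- A star operation on the nonzero fractional ideals of an integral domain `D`
with quotient field `K`: it fixes nonzero principal fractional ideals, commutes with
multiplication by nonzero principal fractional ideals, is extensive, monotone and
idempotent (on nonzero fractional ideals). -/
structure StarOperation (D K : Type*) [CommRing D] [IsDomain D] [Field K]
    [Algebra D K] [IsFractionRing D K] where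
  star : FractionalIdeal D⁰ K → FractionalIdeal D⁰ K
  star_spanSingleton : ∀ x : K, x ≠ 0 →
    star (FractionalIdeal.spanSingleton D⁰ x) = FractionalIdeal.spanSingleton D⁰ x
  star_smul : ∀ (x : K) (I : FractionalIdeal D⁰ K), x ≠ 0 → I ≠ 0 →
    star (FractionalIdeal.spanSingleton D⁰ x * I) = FractionalIdeal.spanSingleton D⁰ x * star I
  le_star : ∀ I : FractionalIdeal D⁰ K, I ≠ 0 → I ≤ star I
  star_mono : ∀ I J : FractionalIdeal D⁰ K, I ≠ 0 → J ≠ 0 → I ≤ J → star I ≤ star J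
  star_idem : ∀ I : FractionalIdeal D⁰ K, I ≠ 0 → star (star I) = star I

namespace StarOperation

variable {D K : Type*} [CommRing D] [IsDomain D] [Field K] [Algebra D K] [IsFractionRing D K]
variable (s : StarOperation D K)

/-- `*` has finite character: for every nonzero fractional ideal `I`, `I^*` is the union
of `J^*` over the nonzero finitely generated fractional subideals `J` of `I`. -/
def FiniteCharacter : Prop :=
  ∀ I : FractionalIdeal D⁰ K, I ≠ 0 → ∀ x ∈ s.star I,
    ∃ J : FractionalIdeal D⁰ K, J ≠ 0 ∧ (J : Submodule D K).FG ∧ J ≤ I ∧ x ∈ s.star J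

/-- A (nonzero) integral ideal `I` of `D` is a `*`-ideal if `I^* = I`. -/
def IsStarIdeal (I : Ideal D) : Prop :=
  I ≠ ⊥ ∧ s.star (I : FractionalIdeal D⁰ K) = (I : FractionalIdeal D⁰ K)

/-- An integral ideal `I` of `D` is a `*`-ideal of finite type if `I = J^*` for some
nonzero finitely generated ideal `J`. -/
def IsFiniteTypeStarIdeal (I : Ideal D) : Prop :=
  ∃ J : Ideal D, J ≠ ⊥ ∧ J.FG ∧
    s.star (J : FractionalIdeal D⁰ K) = (I : FractionalIdeal D⁰ K)

/-- A maximal `*`-ideal: maximal among proper integral `*`-ideals. -/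
def IsMaxStarIdeal (M : Ideal D) : Prop :=
  M ≠ ⊤ ∧ s.IsStarIdeal M ∧ ∀ J : Ideal D, J ≠ ⊤ → s.IsStarIdeal J → M ≤ J → J = M

/-- `I` is `*`-homogeneous: a proper `*`-ideal of finite type such that `(J + J')^* ≠ D`
for every pair `J`, `J'` of proper `*`-ideals of finite type containing `I`. -/
def IsHomog (I : Ideal D) : Prop :=
  I ≠ ⊤ ∧ s.IsStarIdeal I ∧ s.IsFiniteTypeStarIdeal I ∧
    ∀ J J' : Ideal D, J ≠ ⊤ → J' ≠ ⊤ → s.IsStarIdeal J → s.IsStarIdeal J' →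
      s.IsFiniteTypeStarIdeal J → s.IsFiniteTypeStarIdeal J' → I ≤ J → I ≤ J' →
      s.star ((J + J' : Ideal D) : FractionalIdeal D⁰ K) ≠ 1

/-- The set `M(I) = {x ∈ D : (xD + I)^* ≠ D}` attached to an ideal `I`. -/
def MSet (I : Ideal D) : Set D :=
  {x : D | s.star ((Ideal.span {x} + I : Ideal D) : FractionalIdeal D⁰ K) ≠ 1}

/-- `A` and `B` are `*`-comaximal if `(A + B)^* = D`. -/
def StarComaximal (A B : Ideal D) : Prop :=
  s.star ((A + B : Ideal D) : FractionalIdeal D⁰ K) = 1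

/-- An integral ideal `I` is `*`-invertible if `(I · I⁻¹)^* = D`. -/
def StarInvertible (I : Ideal D) : Prop :=
  s.star ((I : FractionalIdeal D⁰ K) * (I : FractionalIdeal D⁰ K)⁻¹) = 1

/-- `D` is a `*`-SH domain: every principal ideal generated by a nonzero nonunit is a
`*`-product of finitely many `*`-homogeneous ideals. -/
def IsSHDomain : Prop :=
  ∀ x : D, x ≠ 0 → ¬IsUnit x →
    ∃ T : Multiset (Ideal D), (∀ J ∈ T, s.IsHomog J) ∧
      s.star ((T.prod : Ideal D) : FractionalIdeal D⁰ K) =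
        ((Ideal.span {x} : Ideal D) : FractionalIdeal D⁰ K)

/-- `D` has finite `*`-character: every nonzero nonunit lies in only finitely many
maximal `*`-ideals. -/
def FiniteStarCharacter : Prop :=
  ∀ x : D, x ≠ 0 → ¬IsUnit x → {P : Ideal D | s.IsMaxStarIdeal P ∧ x ∈ P}.Finite

end StarOperation

namespace StarOperation

variable {D K : Type*} [CommRing D] [IsDomain D] [Field K] [Algebra D K] [IsFractionRing D K]

/-- A `*`-homogeneous ideal `I` is `*`-super homogeneous if every `*`-ideal of finite
type containing `I` is `*`-invertible. -/
def IsSuperHomog (s : StarOperation D K) (I : Ideal D) : Prop :=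
  s.IsHomog I ∧ ∀ J : Ideal D, s.IsStarIdeal J → s.IsFiniteTypeStarIdeal J → I ≤ J →
    s.StarInvertible J

/-- `D` is a `*`-independent ring of Krull type: localizations at maximal `*`-ideals are
valuation domains, `D` is the locally finite intersection of these localizations (inside
`K`), and no two distinct maximal `*`-ideals contain a common nonzero prime ideal. -/
def IsIRKT (s : StarOperation D K) : Prop :=
  (∀ (P : Ideal D) [P.IsPrime], s.IsMaxStarIdeal P →
    ValuationRing (Localization.AtPrime P)) ∧
  (∀ x : K, (∀ P : Ideal D, s.IsMaxStarIdeal P →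
      ∃ a t : D, t ∉ P ∧ x * algebraMap D K t = algebraMap D K a) →
    ∃ d : D, algebraMap D K d = x) ∧
  s.FiniteStarCharacter ∧
  (∀ P Q : Ideal D, s.IsMaxStarIdeal P → s.IsMaxStarIdeal Q → P ≠ Q →
    ∀ L : Ideal D, L.IsPrime → L ≠ ⊥ → ¬(L ≤ P ⊓ Q))

end StarOperation


namespace StarAux

variable {D K : Type*} [CommRing D] [IsDomain D] [Field K] [Algebra D K] [IsFractionRing D K]

/-- `x` divides `y` in the localization at `P`. -/
def Dv (P : Ideal D) (x y : D) : Prop := ∃ t, t ∉ P ∧ x ∣ t * y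

/-- `I D_P = d D_P`, in a finite-type sense. -/
def PL (P : Ideal D) (I : Ideal D) (d : D) : Prop :=
  (∃ t, t ∉ P ∧ t * d ∈ I) ∧ ∃ t, t ∉ P ∧ ∀ x ∈ I, d ∣ t * x

section elem
variable {P : Ideal D} [hP : P.IsPrime]

lemma one_nmem : (1 : D) ∉ P := fun h => hP.ne_top ((Ideal.eq_top_iff_one _).2 h)

lemma mul_nmem {s t : D} (hs : s ∉ P) (ht : t ∉ P) : s * t ∉ P := fun h =>
  (hP.mem_or_mem h).elim hs ht

lemma Dv.of_dvd {x y : D} (h : x ∣ y) : Dv P x y := ⟨1, one_nmem, by simpa using h⟩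

lemma Dv.trans {x y z : D} (h : Dv P x y) (h' : Dv P y z) : Dv P x z := by
  obtain ⟨s, hs, a, ha⟩ := h
  obtain ⟨t, ht, b, hb⟩ := h'
  exact ⟨s * t, mul_nmem hs ht, a * b, by
    calc s * t * z = s * (t * z) := by ring
      _ = (s * y) * b := by rw [hb]; ring
      _ = _ := by rw [ha]; ring⟩

lemma Dv.mul {x y z w : D} (h : Dv P x y) (h' : Dv P z w) : Dv P (x * z) (y * w) := by
  obtain ⟨s, hs, h⟩ := h
  obtain ⟨t, ht, h'⟩ := h'
  refine ⟨s * t, mul_nmem hs ht, ?_⟩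
  have := mul_dvd_mul h h'
  rwa [mul_mul_mul_comm] at this

lemma Dv.pow {x y : D} (h : Dv P x y) (n : ℕ) : Dv P (x ^ n) (y ^ n) := by
  induction n with
  | zero => simpa using Dv.of_dvd dvd_rfl
  | succ k ih => rw [pow_succ, pow_succ]; exact ih.mul h

lemma Dv.cancel {x y z : D} (hz : z ≠ 0) (h : Dv P (z * x) (z * y)) : Dv P x y := by
  obtain ⟨s, hs, h⟩ := h
  refine ⟨s, hs, ?_⟩
  rw [show s * (z * y) = z * (s * y) by ring] at h
  exact (mul_dvd_mul_iff_left hz).1 h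

lemma Dv.total [ValuationRing (Localization.AtPrime P)] (x y : D) : Dv P x y ∨ Dv P y x := by
  have key : ∀ x y : D, algebraMap D (Localization.AtPrime P) x ∣
      algebraMap D (Localization.AtPrime P) y → Dv P x y := by
    rintro x y ⟨c, hc⟩
    obtain ⟨⟨r, s⟩, hrs⟩ := IsLocalization.surj P.primeCompl c
    have : algebraMap D (Localization.AtPrime P) (s * y) =
        algebraMap D (Localization.AtPrime P) (x * r) := by
      rw [map_mul, map_mul, hc, ← hrs]; ring
    have hinj : Function.Injective (algebraMap D (Localization.AtPrime P)) :=
      IsLocalization.injective _ P.primeCompl_le_nonZeroDivisors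
    exact ⟨s, s.2, r, hinj this⟩
  rcases ValuationRing.dvd_total (algebraMap D (Localization.AtPrime P) x)
    (algebraMap D (Localization.AtPrime P) y) with h | h
  · exact Or.inl (key _ _ h)
  · exact Or.inr (key _ _ h)

lemma PL.mul {I J : Ideal D} {d e : D} (h : PL P I d) (h' : PL P J e) : PL P (I * J) (d * e) := by
  obtain ⟨⟨s, hs, h1⟩, ⟨s', hs', h2⟩⟩ := h
  obtain ⟨⟨t, ht, h3⟩, ⟨t', ht', h4⟩⟩ := h'
  refine ⟨⟨s * t, mul_nmem hs ht, ?_⟩, ⟨s' * t', mul_nmem hs' ht', ?_⟩⟩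
  · rw [mul_mul_mul_comm]; exact Ideal.mul_mem_mul h1 h3
  · intro x hx
    induction hx using Submodule.mul_induction_on' with
    | mem_mul_mem a ha b hb =>
      rw [mul_mul_mul_comm]; exact mul_dvd_mul (h2 a ha) (h4 b hb)
    | add a _ b _ h5 h6 => rw [mul_add]; exact dvd_add h5 h6

lemma PL.top : PL P ⊤ 1 := ⟨⟨1, one_nmem, trivial⟩, ⟨1, one_nmem, fun x _ => one_dvd _⟩⟩

lemma PL.pow {I : Ideal D} {d : D} (h : PL P I d) (n : ℕ) : PL P (I ^ n) (d ^ n) := by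
  induction n with
  | zero => simpa using PL.top
  | succ k ih => rw [pow_succ, pow_succ]; exact ih.mul h

lemma PL.dv {I : Ideal D} {d e : D} (h : PL P I d) (h' : PL P I e) : Dv P d e := by
  obtain ⟨t, ht, h1⟩ := h'.1
  obtain ⟨s, hs, h2⟩ := h.2
  exact ⟨s * t, mul_nmem hs ht, by rw [mul_assoc]; exact h2 _ h1⟩

lemma PL.congr {I : Ideal D} {d e : D} (h : PL P I d) (h1 : Dv P d e) (h2 : Dv P e d) :
    PL P I e := by
  obtain ⟨⟨s, hs, h3⟩, ⟨s', hs', h4⟩⟩ := h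
  obtain ⟨t, ht, a, ha⟩ := h1
  obtain ⟨t', ht', h2⟩ := h2
  refine ⟨⟨s * t, mul_nmem hs ht, ?_⟩, ⟨t' * s', mul_nmem ht' hs', fun x hx => ?_⟩⟩
  · rw [mul_assoc, ha, ← mul_assoc]; exact Ideal.mul_mem_right _ _ h3
  · obtain ⟨b, hb⟩ := h4 x hx
    rw [mul_assoc, hb, ← mul_assoc]; exact Dvd.dvd.mul_right h2 b

lemma PL.sup_left {I : Ideal D} {d a : D} (h : PL P I d) (h1 : Dv P d a) :
    PL P (I ⊔ Ideal.span {a}) d := by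
  obtain ⟨⟨s, hs, h3⟩, ⟨s', hs', h4⟩⟩ := h
  obtain ⟨t, ht, h1⟩ := h1
  refine ⟨⟨s, hs, Ideal.mem_sup_left h3⟩, ⟨t * s', mul_nmem ht hs', fun x hx => ?_⟩⟩
  obtain ⟨y, hy, z, hz, rfl⟩ := Submodule.mem_sup.1 hx
  obtain ⟨c, rfl⟩ := Ideal.mem_span_singleton'.1 hz
  rw [mul_add]
  refine dvd_add ?_ ?_
  · rw [mul_assoc]; exact (h4 y hy).mul_left _
  · rw [show t * s' * (c * a) = (t * a) * (s' * c) by ring]; exact h1.mul_right _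

lemma PL.sup_right {I : Ideal D} {d a : D} (h : PL P I d) (h1 : Dv P a d) :
    PL P (I ⊔ Ideal.span {a}) a := by
  obtain ⟨⟨s, hs, h3⟩, ⟨s', hs', h4⟩⟩ := h
  obtain ⟨t, ht, h1⟩ := h1
  refine ⟨⟨1, one_nmem, Ideal.mem_sup_right (by
    rw [one_mul]; exact Ideal.mem_span_singleton_self a)⟩,
    ⟨t * s', mul_nmem ht hs', fun x hx => ?_⟩⟩
  obtain ⟨y, hy, z, hz, rfl⟩ := Submodule.mem_sup.1 hx
  obtain ⟨c, rfl⟩ := Ideal.mem_span_singleton'.1 hz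
  rw [mul_add]
  refine dvd_add ?_ ?_
  · obtain ⟨b, hb⟩ := h4 y hy
    rw [mul_assoc, hb, ← mul_assoc]; exact h1.mul_right _
  · exact ⟨t * s' * c, by ring⟩

lemma PL.span (a : D) : PL P (Ideal.span {a}) a :=
  ⟨⟨1, one_nmem, by rw [one_mul]; exact Ideal.mem_span_singleton_self a⟩,
    ⟨1, one_nmem, fun x hx => by rw [one_mul]; exact Ideal.mem_span_singleton.1 hx⟩⟩

end elem

/-- Induction over finitely generated ideals. -/
lemma fg_ind (p : Ideal D → Prop) (h0 : p ⊥)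
    (h1 : ∀ J : Ideal D, J.FG → ∀ a, p J → p (J ⊔ Ideal.span {a})) (J : Ideal D) (hJ : J.FG) :
    p J := by
  classical
  obtain ⟨S, rfl⟩ := hJ
  induction S using Finset.induction_on with
  | empty => simpa using h0
  | insert a S _ ih =>
    have := h1 _ ⟨S, rfl⟩ a ih
    rw [Finset.coe_insert, Ideal.span_insert, sup_comm]
    exact this

lemma PL.exists_fg {P : Ideal D} [P.IsPrime] [ValuationRing (Localization.AtPrime P)]
    (J : Ideal D) (hJ : J.FG) : ∃ y, PL P J y := by
  refine fg_ind (fun J => ∃ y, PL P J y) ⟨0, ⟨1, one_nmem, by simp⟩, ⟨1, one_nmem, by simp⟩⟩ ?_ J hJ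
  rintro J - a ⟨y, hy⟩
  rcases Dv.total (P := P) y a with h | h
  · exact ⟨y, hy.sup_left h⟩
  · exact ⟨a, hy.sup_right h⟩

section star
variable (s : StarOperation D K)

lemma coe_ne {I : Ideal D} (hI : I ≠ ⊥) : (I : FractionalIdeal D⁰ K) ≠ 0 :=
  FractionalIdeal.coeIdeal_ne_zero.2 hI

lemma star_span {d : D} (hd : d ≠ 0) :
    s.star ((Ideal.span {d} : Ideal D) : FractionalIdeal D⁰ K) = (Ideal.span {d} : Ideal D) := by
  rw [FractionalIdeal.coeIdeal_span_singleton]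
  exact s.star_spanSingleton _ (by simpa using hd)

lemma star_one : s.star 1 = 1 := by
  have := star_span s (d := (1 : D)) one_ne_zero
  simpa using this

lemma exists_star {I : Ideal D} (hI : I ≠ ⊥) : ∃ A : Ideal D, I ≤ A ∧ A ≠ ⊥ ∧
    s.star (I : FractionalIdeal D⁰ K) = A ∧ s.IsStarIdeal A := by
  have h1 : s.star (I : FractionalIdeal D⁰ K) ≤ 1 := by
    rw [← star_one s]
    exact s.star_mono _ _ (coe_ne hI) one_ne_zero FractionalIdeal.coeIdeal_le_one
  obtain ⟨A, hA⟩ := FractionalIdeal.le_one_iff_exists_coeIdeal.1 h1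
  have h2 : I ≤ A := by
    rw [← FractionalIdeal.coeIdeal_le_coeIdeal K, hA]; exact s.le_star _ (coe_ne hI)
  have h3 : A ≠ ⊥ := fun h => hI (le_bot_iff.1 (h ▸ h2))
  exact ⟨A, h2, h3, hA.symm, h3, by rw [hA]; exact s.star_idem _ (coe_ne hI)⟩

/-- `t I ⊆ J` implies `t I* ⊆ J*`. -/
lemma star_mul_mem {I J A B : Ideal D} (hI : I ≠ ⊥) (hJ : J ≠ ⊥)
    (hA : s.star (I : FractionalIdeal D⁰ K) = A) (hB : s.star (J : FractionalIdeal D⁰ K) = B)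
    (t : D) (h : ∀ x ∈ I, t * x ∈ J) : ∀ x ∈ A, t * x ∈ B := by
  intro x hx
  by_cases ht : t = 0
  · simp [ht]
  have ht' : algebraMap D K t ≠ 0 := by simpa using ht
  have hle : Ideal.span {t} * I ≤ J := by
    rw [Ideal.span_singleton_mul_le_iff]; exact h
  have hle' := (FractionalIdeal.coeIdeal_le_coeIdeal K).2 hle
  have hne : Ideal.span {t} * I ≠ ⊥ := by
    rw [Ne, Ideal.mul_eq_bot]; simp [ht, hI]
  have := s.star_mono _ _ (coe_ne hne) (coe_ne hJ) hle'
  rw [FractionalIdeal.coeIdeal_mul, FractionalIdeal.coeIdeal_span_singleton,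
    s.star_smul _ _ ht' (coe_ne hI), hA, hB, ← FractionalIdeal.coeIdeal_span_singleton,
    ← FractionalIdeal.coeIdeal_mul, FractionalIdeal.coeIdeal_le_coeIdeal,
    Ideal.span_singleton_mul_le_iff] at this
  exact this x hx

lemma star_dvd {I A : Ideal D} (hI : I ≠ ⊥) (hA : s.star (I : FractionalIdeal D⁰ K) = A)
    {d t : D} (hd : d ≠ 0) (h : ∀ x ∈ I, d ∣ t * x) : ∀ x ∈ A, d ∣ t * x := by
  intro x hx
  rw [← Ideal.mem_span_singleton]
  exact star_mul_mem s hI (J := Ideal.span {d}) (by simpa using hd) hA (star_span s hd) t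
    (fun x hx => Ideal.mem_span_singleton.2 (h x hx)) x hx

lemma star_le {I A M : Ideal D} (hI : I ≠ ⊥) (hA : s.star (I : FractionalIdeal D⁰ K) = A)
    (hM : s.IsStarIdeal M) (h : I ≤ M) : A ≤ M := by
  intro x hx
  simpa using star_mul_mem s hI hM.1 hA hM.2 1 (fun x hx => by simpa using h hx) x hx

lemma max_prime {P : Ideal D} (hP : s.IsMaxStarIdeal P) : P.IsPrime := by
  obtain ⟨h1, h2, h3⟩ := hP
  refine ⟨h1, ?_⟩
  intro x y hxy
  by_contra hcon
  push Not at hcon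
  have hne : P ⊔ Ideal.span {x} ≠ ⊥ := fun h => h2.1 (le_bot_iff.1 (h ▸ le_sup_left))
  obtain ⟨A, hA, hA0, hAs, hAi⟩ := exists_star s hne
  have hAt : A = ⊤ := by
    by_contra hAt
    have := h3 A hAt hAi (le_sup_left.trans hA)
    apply hcon.1
    rw [← this]
    exact hA (Ideal.mem_sup_right (Ideal.mem_span_singleton_self x))
  apply hcon.2
  have := star_mul_mem s hne h2.1 hAs h2.2 y (by
    intro z hz
    obtain ⟨u, hu, v, hv, rfl⟩ := Submodule.mem_sup.1 hz
    obtain ⟨c, rfl⟩ := Ideal.mem_span_singleton'.1 hv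
    rw [mul_add]
    refine P.add_mem (P.mul_mem_left _ hu) ?_
    rw [show y * (c * x) = c * (x * y) by ring]
    exact P.mul_mem_left _ hxy) 1 (by rw [hAt]; trivial)
  simpa using this

lemma exists_max (hs : s.FiniteCharacter) {A : Ideal D} (hA : s.IsStarIdeal A) (hA' : A ≠ ⊤) :
    ∃ P, s.IsMaxStarIdeal P ∧ A ≤ P := by
  obtain ⟨P, hAP, hP⟩ := zorn_le_nonempty₀ {J : Ideal D | J ≠ ⊤ ∧ s.IsStarIdeal J} (by
    intro c hc hch M hM
    have hdir : DirectedOn (· ≤ ·) c := hch.directedOn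
    have hle : ∀ z ∈ c, z ≤ sSup c := fun z hz => le_sSup hz
    have hne : sSup c ≠ ⊥ := fun h => (hc hM).2.1 (le_bot_iff.1 (h ▸ hle M hM))
    refine ⟨sSup c, ⟨?_, hne, ?_⟩, hle⟩
    · intro h
      have : (1 : D) ∈ sSup c := by rw [h]; trivial
      obtain ⟨N, hN, h1⟩ := (Submodule.mem_sSup_of_directed ⟨M, hM⟩ hdir).1 this
      exact (hc hN).1 ((Ideal.eq_top_iff_one _).2 h1)
    · refine le_antisymm ?_ (s.le_star _ (coe_ne hne))
      intro x hx
      obtain ⟨J, hJ0, hJfg, hJle, hxJ⟩ := hs _ (coe_ne hne) x hx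
      obtain ⟨J', rfl⟩ := FractionalIdeal.le_one_iff_exists_coeIdeal.1
        (hJle.trans FractionalIdeal.coeIdeal_le_one)
      have hfg : J'.FG := (FractionalIdeal.coeIdeal_fg D⁰
        (IsFractionRing.injective D K) J').1 hJfg
      have hJ'le : J' ≤ sSup c := (FractionalIdeal.coeIdeal_le_coeIdeal K).1 hJle
      have hcomp := (Submodule.fg_iff_compact J').1 hfg
      obtain ⟨N, hN, hJN⟩ := (CompleteLattice.isCompactElement_iff_le_of_directed_sSup_le
        (Ideal D) J').1 hcomp c ⟨M, hM⟩ hdir hJ'le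
      have h1 := s.star_mono _ _ hJ0 (coe_ne (hc hN).2.1)
        ((FractionalIdeal.coeIdeal_le_coeIdeal K).2 hJN) hxJ
      rw [(hc hN).2.2] at h1
      exact (FractionalIdeal.coeIdeal_le_coeIdeal K).2 (hle N hN) h1) A ⟨hA', hA⟩
  refine ⟨P, ⟨hP.prop.1, hP.prop.2, fun J hJ hJs hle => ?_⟩, hAP⟩
  exact (hP.eq_of_le ⟨hJ, hJs⟩ hle).symm

lemma star_eq_one (hs : s.FiniteCharacter) {I : Ideal D} (hI : I ≠ ⊥)
    (h : ∀ P, s.IsMaxStarIdeal P → ¬ I ≤ P) : s.star (I : FractionalIdeal D⁰ K) = 1 := by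
  obtain ⟨A, hA, hA0, hAs, hAi⟩ := exists_star s hI
  by_cases hT : A = ⊤
  · rw [hAs, hT]; simp
  · obtain ⟨P, hP, hle⟩ := exists_max s hs hAi hT
    exact absurd (hA.trans hle) (h P hP)

lemma PL.star {P I A : Ideal D} {d : D} (hI : I ≠ ⊥) (hd : d ≠ 0)
    (hA : s.star (I : FractionalIdeal D⁰ K) = A) (h : PL P I d) : PL P A d := by
  obtain ⟨⟨t, ht, h1⟩, ⟨t', ht', h2⟩⟩ := h
  refine ⟨⟨t, ht, ?_⟩, ⟨t', ht', star_dvd s hI hA hd h2⟩⟩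
  have := s.le_star _ (coe_ne (K := K) hI)
  rw [hA, FractionalIdeal.coeIdeal_le_coeIdeal] at this
  exact this h1

lemma PL.ne_zero {P I : Ideal D} [P.IsPrime] {d : D} (hI : I ≠ ⊥) (h : PL P I d) : d ≠ 0 := by
  rintro rfl
  obtain ⟨t, ht, h⟩ := h.2
  apply hI
  rw [eq_bot_iff]
  intro x hx
  have := zero_dvd_iff.1 (h x hx)
  rcases mul_eq_zero.1 this with h | h
  · exact absurd (h ▸ P.zero_mem) ht
  · simpa using h

lemma global_dvd (hD : s.IsIRKT) {x y : D} (hx : x ≠ 0)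
    (h : ∀ P, s.IsMaxStarIdeal P → Dv P x y) : x ∣ y := by
  have hx' : algebraMap D K x ≠ 0 := by simpa using hx
  obtain ⟨d, hd⟩ := hD.2.1 (algebraMap D K y / algebraMap D K x) (by
    intro P hP
    obtain ⟨t, ht, a, ha⟩ := h P hP
    refine ⟨a, t, ht, ?_⟩
    rw [div_mul_eq_mul_div, div_eq_iff hx', ← map_mul, ← map_mul, mul_comm y, ha, mul_comm])
  refine ⟨d, IsFractionRing.injective D K ?_⟩
  rw [map_mul, hd, mul_div_cancel₀ _ hx']

lemma PL.star_eq (hs : s.FiniteCharacter) (hD : s.IsIRKT) {I : Ideal D} {d : D} (hI : I ≠ ⊥)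
    (hd : d ≠ 0) (h : ∀ P, s.IsMaxStarIdeal P → PL P I d) :
    s.star (I : FractionalIdeal D⁰ K) = (Ideal.span {d} : Ideal D) := by
  obtain ⟨A, hA, hA0, hAs, hAi⟩ := exists_star s hI
  rw [hAs]
  congr 1
  apply le_antisymm
  · refine star_le s hI hAs ⟨by simpa using hd, star_span s hd⟩ ?_
    intro x hx
    rw [Ideal.mem_span_singleton]
    refine global_dvd s hD hd fun P hP => ?_
    obtain ⟨t, ht, h1⟩ := (h P hP).2
    exact ⟨t, ht, h1 x hx⟩
  · rw [Ideal.span_singleton_le_iff_mem]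
    let C : Ideal D := I.colon ((Ideal.span {d} : Ideal D) : Set D)
    have hC : ∀ t, t ∈ C ↔ d * t ∈ I := by
      intro t
      rw [Submodule.mem_colon]
      constructor
      · intro h; have := h d (Ideal.mem_span_singleton_self d)
        rwa [smul_eq_mul, mul_comm] at this
      · intro h p hp
        obtain ⟨c, rfl⟩ := Ideal.mem_span_singleton'.1 hp
        rw [smul_eq_mul, show t * (c * d) = c * (d * t) by ring]
        exact I.mul_mem_left _ h
    have hIC : I ≤ C := fun x hx => (hC x).2 (I.mul_mem_left _ hx)
    have hC0 : C ≠ ⊥ := fun h => hI (le_bot_iff.1 (h ▸ hIC))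
    have hC1 : s.star (C : FractionalIdeal D⁰ K) = ((⊤ : Ideal D) : FractionalIdeal D⁰ K) := by
      rw [star_eq_one s hs hC0]
      · simp
      · intro P hP hle
        obtain ⟨t, ht, h1⟩ := (h P hP).1
        exact ht (hle ((hC t).2 (by rwa [mul_comm])))
    simpa using star_mul_mem s hC0 hI hC1 hAs d (fun x hx => (hC x).1 hx) 1 trivial

end star


section main
variable (s : StarOperation D K)

lemma valP (hD : s.IsIRKT) {P : Ideal D} [P.IsPrime] (hP : s.IsMaxStarIdeal P) :
    ValuationRing (Localization.AtPrime P) := hD.1 P hP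

lemma indep (hD : s.IsIRKT) {P Q : Ideal D} (hP : s.IsMaxStarIdeal P) (hQ : s.IsMaxStarIdeal Q)
    (hPQ : P ≠ Q) {y : D} (hy : y ≠ 0) : ∃ t, t ∉ Q ∧ Dv P y t := by
  haveI := max_prime s hP
  haveI := max_prime s hQ
  by_contra hcon
  push Not at hcon
  have hdis : Disjoint ((Ideal.span {y} : Ideal D) : Set D)
      ((P.primeCompl ⊔ Q.primeCompl : Submonoid D) : Set D) := by
    rw [Set.disjoint_left]
    intro z hz hz'
    obtain ⟨a, ha, t, ht, rfl⟩ := Submonoid.mem_sup.1 hz'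
    exact hcon t ht ⟨a, ha, Ideal.mem_span_singleton.1 hz⟩
  obtain ⟨L, hL, hle, hd⟩ := Ideal.exists_le_prime_disjoint _ _ hdis
  refine hD.2.2.2 P Q hP hQ hPQ L hL ?_ (le_inf ?_ ?_)
  · rintro rfl
    exact hy (by simpa using hle (Ideal.mem_span_singleton_self y))
  · intro x hx
    by_contra h
    exact Set.disjoint_left.1 hd hx (Submonoid.mem_sup_left (S := P.primeCompl) h)
  · intro x hx
    by_contra h
    exact Set.disjoint_left.1 hd hx (Submonoid.mem_sup_right (T := Q.primeCompl) h)

lemma finite_type_inv (hs : s.FiniteCharacter) (hD : s.IsIRKT) {J : Ideal D}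
    (hJ : s.IsStarIdeal J) (hJf : s.IsFiniteTypeStarIdeal J) : s.StarInvertible J := by
  obtain ⟨F, hF0, hFfg, hF⟩ := hJf
  have hJ0 := coe_ne (K := K) hJ.1
  unfold StarOperation.StarInvertible
  have hle : (J : FractionalIdeal D⁰ K) * (J : FractionalIdeal D⁰ K)⁻¹ ≤ 1 := by
    rw [FractionalIdeal.inv_eq]
    exact FractionalIdeal.mul_one_div_le_one
  obtain ⟨C, hC⟩ := FractionalIdeal.le_one_iff_exists_coeIdeal.1 hle
  rw [← hC]
  have hmem : ∀ y t : D, y ≠ 0 → y ∈ J → (∀ x ∈ J, y ∣ t * x) → t ∈ C := by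
    intro y t hy hyJ h
    have hy' : algebraMap D K y ≠ 0 := by simpa using hy
    have h1 : algebraMap D K t / algebraMap D K y ∈ (J : FractionalIdeal D⁰ K)⁻¹ := by
      rw [FractionalIdeal.inv_eq, FractionalIdeal.mem_div_iff_of_ne_zero hJ0]
      intro z hz
      obtain ⟨x, hx, rfl⟩ := (FractionalIdeal.mem_coeIdeal _).1 hz
      obtain ⟨c, hc⟩ := h x hx
      rw [FractionalIdeal.mem_one_iff]
      refine ⟨c, ?_⟩
      rw [div_mul_eq_mul_div, eq_div_iff hy', ← map_mul, ← map_mul, hc, mul_comm]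
    have h2 := FractionalIdeal.mul_mem_mul
      (FractionalIdeal.mem_coeIdeal_of_mem (P := K) D⁰ hyJ) h1
    rw [mul_div_cancel₀ _ hy', ← hC] at h2
    obtain ⟨x, hx, hxt⟩ := (FractionalIdeal.mem_coeIdeal _).1 h2
    rwa [← IsFractionRing.injective D K hxt]
  have hlocal : ∀ P, s.IsMaxStarIdeal P → ∃ t, t ∉ P ∧ t ∈ C := by
    intro P hP
    haveI := max_prime s hP
    haveI := valP s hD hP
    obtain ⟨y, hy⟩ := PL.exists_fg (P := P) F hFfg
    have hy0 := PL.ne_zero hF0 hy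
    obtain ⟨⟨u, hu, h1⟩, ⟨t, ht, h2⟩⟩ := PL.star s hF0 hy0 hF hy
    have hu0 : u ≠ 0 := fun h => hu (h ▸ P.zero_mem)
    refine ⟨u * t, mul_nmem hu ht, hmem (u * y) (u * t) (mul_ne_zero hu0 hy0) h1 ?_⟩
    intro x hx
    rw [mul_assoc]
    exact mul_dvd_mul_left u (h2 x hx)
  refine star_eq_one s hs ?_ ?_
  · rintro rfl
    obtain ⟨y, hy, hy0⟩ := Submodule.exists_mem_ne_zero_of_ne_bot hJ.1
    exact hy0 (by simpa using hmem y y hy0 hy (fun x _ => dvd_mul_right y x))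
  · intro P hP hle
    obtain ⟨t, ht, h⟩ := hlocal P hP
    exact ht (hle h)

lemma exists_super (hs : s.FiniteCharacter) (hD : s.IsIRKT) {P : Ideal D}
    (hP : s.IsMaxStarIdeal P) {y : D} (hy : y ≠ 0) (hyP : y ∈ P) :
    ∃ A : Ideal D, s.IsSuperHomog A ∧ PL P A y ∧
      ∀ Q, s.IsMaxStarIdeal Q → Q ≠ P → PL Q A 1 := by
  classical
  haveI := max_prime s hP
  have hu : ¬ IsUnit y := fun h => hP.1 (Ideal.eq_top_of_isUnit_mem _ hyP h)
  have hfin := hD.2.2.1 y hy hu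
  have key : ∀ F : Finset (Ideal D), (∀ Q ∈ F, s.IsMaxStarIdeal Q) →
      ∃ B : Ideal D, B.FG ∧ y ∈ B ∧ PL P B y ∧ ∀ Q ∈ F, Q ≠ P → ¬ B ≤ Q := by
    intro F
    induction F using Finset.induction_on with
    | empty =>
      intro _
      exact ⟨Ideal.span {y}, Submodule.fg_span_singleton y, Ideal.mem_span_singleton_self y,
        PL.span y, by simp⟩
    | insert Q F _ ih =>
      intro hF
      obtain ⟨B, h1, h2, h3, h4⟩ := ih (fun Q hQ => hF Q (Finset.mem_insert_of_mem hQ))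
      by_cases hQP : Q = P
      · refine ⟨B, h1, h2, h3, ?_⟩
        intro Q' hQ' hne
        rcases Finset.mem_insert.1 hQ' with h | h
        · exact absurd (h.trans hQP) hne
        · exact h4 Q' h hne
      · obtain ⟨t, ht, hdv⟩ := indep s hD hP (hF Q (Finset.mem_insert_self _ _)) (Ne.symm hQP) hy
        refine ⟨B ⊔ Ideal.span {t}, Submodule.FG.sup h1 (Submodule.fg_span_singleton t),
          Ideal.mem_sup_left h2, h3.sup_left hdv, ?_⟩
        intro Q' hQ' hne hle
        rcases Finset.mem_insert.1 hQ' with h | h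
        · subst h
          exact ht (hle (Ideal.mem_sup_right (Ideal.mem_span_singleton_self t)))
        · exact h4 Q' h hne (le_sup_left.trans hle)
  obtain ⟨B, h1, h2, h3, h4⟩ := key hfin.toFinset (fun Q hQ => (by simpa using hQ :
    s.IsMaxStarIdeal Q ∧ y ∈ Q).1)
  have hB0 : B ≠ ⊥ := by
    rintro rfl; exact hy (by simpa using h2)
  have hBQ : ∀ Q, s.IsMaxStarIdeal Q → B ≤ Q → Q = P := by
    intro Q hQ hle
    by_contra hne
    exact h4 Q (by simpa using ⟨hQ, hle h2⟩) hne hle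
  have hBP : B ≤ P := by
    intro x hx
    obtain ⟨t, ht, h5⟩ := h3.2
    exact (Ideal.IsPrime.mem_or_mem ‹P.IsPrime›
      (P.mem_of_dvd (h5 x hx) hyP)).resolve_left ht
  obtain ⟨A, hBA, hA0, hAs, hAi⟩ := exists_star s hB0
  have hAP : A ≤ P := star_le s hB0 hAs hP.2.1 hBP
  have hJP : ∀ J : Ideal D, J ≠ ⊤ → s.IsStarIdeal J → A ≤ J → J ≤ P := by
    intro J hJ hJs hle
    obtain ⟨Q, hQ, hJQ⟩ := exists_max s hs hJs hJ
    rw [← hBQ Q hQ (hBA.trans (hle.trans hJQ))]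
    exact hJQ
  refine ⟨A, ⟨⟨?_, hAi, ⟨B, hB0, h1, hAs⟩, ?_⟩, ?_⟩, PL.star s hB0 hy hAs h3, ?_⟩
  · intro h
    exact hP.1 (top_le_iff.1 (h ▸ hAP))
  · intro J J' hJ hJ' hJs hJs' _ _ hle hle' hone
    have hsup : J + J' ≤ P := sup_le (hJP J hJ hJs hle) (hJP J' hJ' hJs' hle')
    have hne : J + J' ≠ ⊥ := fun h => hJs.1 (le_bot_iff.1 (h ▸ (le_sup_left : J ≤ J ⊔ J')))
    have := star_le s hne (A := ⊤) (by rw [hone]; simp) hP.2.1 hsup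
    exact hP.1 (top_le_iff.1 this)
  · intro J hJ hJf _
    exact finite_type_inv s hs hD hJ hJf
  · intro Q hQ hne
    haveI := max_prime s hQ
    obtain ⟨t, htB, htQ⟩ := Set.not_subset.1 (fun h => hne (hBQ Q hQ h))
    exact ⟨⟨t, htQ, by simpa using hBA htB⟩, ⟨1, one_nmem, fun x _ => one_dvd _⟩⟩

lemma PL.of_star {P I : Ideal D} [P.IsPrime] {y d : D} (hI : I ≠ ⊥) (h : PL P I y)
    (hd : s.star (I : FractionalIdeal D⁰ K) = (Ideal.span {d} : Ideal D)) :
    Dv P y d ∧ Dv P d y := by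
  have h1 := PL.star s hI (PL.ne_zero hI h) hd h
  exact ⟨h1.dv (PL.span d), (PL.span d).dv h1⟩

/-- Single-prime step of the backward direction. -/
lemma back_one (hs : s.FiniteCharacter) (hD : s.IsIRKT)
    (H : ∀ A : Ideal D, s.IsSuperHomog A → ∃ n : ℕ, 0 < n ∧ ∃ d : D,
      s.star ((A ^ n : Ideal D) : FractionalIdeal D⁰ K) =
        ((Ideal.span {d} : Ideal D) : FractionalIdeal D⁰ K))
    {P : Ideal D} (hP : s.IsMaxStarIdeal P) {y : D} (hy : y ≠ 0) :
    ∃ n : ℕ, 0 < n ∧ ∃ d : D, (Dv P (y ^ n) d ∧ Dv P d (y ^ n)) ∧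
      ∀ Q, s.IsMaxStarIdeal Q → Q ≠ P → (Dv Q 1 d ∧ Dv Q d 1) := by
  haveI := max_prime s hP
  by_cases hyP : y ∈ P
  · obtain ⟨A, hA, hPA, hQA⟩ := exists_super s hs hD hP hy hyP
    obtain ⟨n, hn, d, hd⟩ := H A hA
    have hA0 : A ^ n ≠ ⊥ := pow_ne_zero n (hA.1.2.1.1)
    refine ⟨n, hn, d, PL.of_star s hA0 (hPA.pow n) hd, ?_⟩
    intro Q hQ hne
    haveI := max_prime s hQ
    exact PL.of_star s hA0 (by simpa using (hQA Q hQ hne).pow n) hd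
  · refine ⟨1, one_pos, 1, ⟨⟨y, hyP, by simp⟩, Dv.of_dvd (one_dvd _)⟩, ?_⟩
    intro Q hQ _
    haveI := max_prime s hQ
    exact ⟨Dv.of_dvd dvd_rfl, Dv.of_dvd dvd_rfl⟩

lemma back_fin (hs : s.FiniteCharacter) (hD : s.IsIRKT)
    (H : ∀ A : Ideal D, s.IsSuperHomog A → ∃ n : ℕ, 0 < n ∧ ∃ d : D,
      s.star ((A ^ n : Ideal D) : FractionalIdeal D⁰ K) =
        ((Ideal.span {d} : Ideal D) : FractionalIdeal D⁰ K))
    (y : Ideal D → D) (hy : ∀ P, y P ≠ 0) (F : Finset (Ideal D))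
    (hF : ∀ P ∈ F, s.IsMaxStarIdeal P) :
    ∃ n : ℕ, 0 < n ∧ ∃ d : D, (∀ P ∈ F, Dv P (y P ^ n) d ∧ Dv P d (y P ^ n)) ∧
      ∀ Q, s.IsMaxStarIdeal Q → Q ∉ F → (Dv Q 1 d ∧ Dv Q d 1) := by
  classical
  induction F using Finset.induction_on with
  | empty =>
    refine ⟨1, one_pos, 1, by simp, ?_⟩
    intro Q hQ _
    haveI := max_prime s hQ
    exact ⟨Dv.of_dvd dvd_rfl, Dv.of_dvd dvd_rfl⟩
  | insert P F hPF ih =>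
    obtain ⟨n, hn, d, h1, h2⟩ := ih (fun Q hQ => hF Q (Finset.mem_insert_of_mem hQ))
    have hP := hF P (Finset.mem_insert_self _ _)
    obtain ⟨m, hm, e, h3, h4⟩ := back_one s hs hD H hP (hy P)
    refine ⟨n * m, Nat.mul_pos hn hm, d ^ m * e ^ n, ?_, ?_⟩
    · intro Q hQ
      have hQm := hF Q hQ
      haveI := max_prime s hQm
      rcases Finset.mem_insert.1 hQ with h | h
      · subst h
        have ha := ((h2 Q hP hPF).1.pow m).mul (h3.1.pow n)
        have hb := ((h2 Q hP hPF).2.pow m).mul (h3.2.pow n)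
        rw [one_pow, one_mul, ← pow_mul, mul_comm m n] at ha hb
        exact ⟨ha, hb⟩
      · have hne : Q ≠ P := fun h' => hPF (h' ▸ h)
        have ha := ((h1 Q h).1.pow m).mul ((h4 Q hQm hne).1.pow n)
        have hb := ((h1 Q h).2.pow m).mul ((h4 Q hQm hne).2.pow n)
        rw [one_pow, mul_one, ← pow_mul] at ha hb
        exact ⟨ha, hb⟩
    · intro Q hQm hQ
      haveI := max_prime s hQm
      have hne : Q ≠ P := fun h => hQ (h ▸ Finset.mem_insert_self _ _)
      have hQF : Q ∉ F := fun h => hQ (Finset.mem_insert_of_mem h)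
      have ha := ((h2 Q hQm hQF).1.pow m).mul ((h4 Q hQm hne).1.pow n)
      have hb := ((h2 Q hQm hQF).2.pow m).mul ((h4 Q hQm hne).2.pow n)
      rw [one_pow, one_pow, mul_one] at ha hb
      exact ⟨ha, hb⟩

lemma backward (hs : s.FiniteCharacter) (hD : s.IsIRKT)
    (H : ∀ A : Ideal D, s.IsSuperHomog A → ∃ n : ℕ, 0 < n ∧ ∃ d : D,
      s.star ((A ^ n : Ideal D) : FractionalIdeal D⁰ K) =
        ((Ideal.span {d} : Ideal D) : FractionalIdeal D⁰ K))
    (a b : D) (ha : a ≠ 0) (hb : b ≠ 0) : ∃ n : ℕ, 0 < n ∧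
      (Ideal.span {a ^ n} ⊓ Ideal.span {b ^ n} : Ideal D).IsPrincipal := by
  classical
  let y : Ideal D → D := fun P => if Dv P a b then a else b
  have hy0 : ∀ P, y P ≠ 0 := by
    intro P; dsimp only [y]; split_ifs <;> assumption
  have hy : ∀ P, s.IsMaxStarIdeal P → (y P = a ∨ y P = b) ∧ Dv P (y P) a ∧ Dv P (y P) b := by
    intro P hP
    haveI := max_prime s hP
    haveI := valP s hD hP
    dsimp only [y]
    split_ifs with h
    · exact ⟨Or.inl rfl, Dv.of_dvd dvd_rfl, h⟩
    · exact ⟨Or.inr rfl, (Dv.total a b).resolve_left h, Dv.of_dvd dvd_rfl⟩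
  have hfin : {P : Ideal D | s.IsMaxStarIdeal P ∧ a ∈ P}.Finite := by
    by_cases hu : IsUnit a
    · convert Set.finite_empty
      ext P
      simp only [Set.mem_setOf_eq, Set.mem_empty_iff_false, iff_false]
      rintro ⟨hP, h⟩
      exact hP.1 (Ideal.eq_top_of_isUnit_mem _ h hu)
    · exact hD.2.2.1 a ha hu
  obtain ⟨n, hn, d, h1, h2⟩ := back_fin s hs hD H y hy0 hfin.toFinset
    (fun Q hQ => (by simpa using hQ : s.IsMaxStarIdeal Q ∧ a ∈ Q).1)
  have hyd : ∀ P, s.IsMaxStarIdeal P → Dv P (y P ^ n) d ∧ Dv P d (y P ^ n) := by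
    intro P hP
    haveI := max_prime s hP
    by_cases haP : a ∈ P
    · exact h1 P (by simpa using ⟨hP, haP⟩)
    · obtain ⟨h3, h4⟩ := h2 P hP (by simpa using fun _ => haP)
      have h5 : Dv P (y P) 1 := (hy P hP).2.1.trans ⟨a, haP, by simp⟩ |>.trans
        (Dv.of_dvd dvd_rfl)
      have h6 := h5.pow n
      rw [one_pow] at h6
      exact ⟨h6.trans h3, h4.trans (Dv.of_dvd (one_dvd _))⟩
  refine ⟨n, hn, ?_⟩
  have han : a ^ n ≠ 0 := pow_ne_zero n ha
  have hbn : b ^ n ≠ 0 := pow_ne_zero n hb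
  by_cases hd0 : d = 0
  · -- then there are no maximal star ideals
    have hno : ∀ P, ¬ s.IsMaxStarIdeal P := by
      intro P hP
      haveI := max_prime s hP
      obtain ⟨t, ht, h⟩ := (hyd P hP).2
      rw [hd0, zero_dvd_iff] at h
      rcases mul_eq_zero.1 h with h | h
      · exact ht (h ▸ P.zero_mem)
      · exact pow_ne_zero n (hy0 P) h
    have hua : a ^ n ∣ b ^ n := global_dvd s hD han (fun P hP => absurd hP (hno P))
    rw [inf_eq_right.2 (Ideal.span_singleton_le_span_singleton.2 hua)]
    exact ⟨⟨b ^ n, rfl⟩⟩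
  have hda : d ∣ a ^ n := global_dvd s hD hd0 (fun P hP => by
    haveI := max_prime s hP
    exact (hyd P hP).2.trans ((hy P hP).2.1.pow n))
  have hdb : d ∣ b ^ n := global_dvd s hD hd0 (fun P hP => by
    haveI := max_prime s hP
    exact (hyd P hP).2.trans ((hy P hP).2.2.pow n))
  obtain ⟨u, hu⟩ := hda
  obtain ⟨v, hv⟩ := hdb
  have hu0 : u ≠ 0 := by rintro rfl; simp [ha] at hu
  have hv0 : v ≠ 0 := by rintro rfl; simp [hb] at hv
  refine ⟨⟨d * u * v, ?_⟩⟩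
  apply le_antisymm
  · rintro x ⟨hxa, hxb⟩
    have hxa := Ideal.mem_span_singleton.1 hxa
    have hxb := Ideal.mem_span_singleton.1 hxb
    refine Ideal.mem_span_singleton.2 (global_dvd s hD (mul_ne_zero (mul_ne_zero hd0 hu0) hv0) ?_)
    intro P hP
    haveI := max_prime s hP
    have h3 := (hyd P hP).1
    have hrefl : ∀ z : D, Dv P z z := fun z => Dv.of_dvd dvd_rfl
    rcases (hy P hP).1 with h | h
    · rw [h] at h3
      refine Dv.trans ?_ (Dv.of_dvd hxb)
      have h4 : Dv P u 1 := by
        apply Dv.cancel hd0; rw [← hu, mul_one]; exact h3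
      rw [hv]
      have := (h4.mul (hrefl (d * v)))
      rw [one_mul] at this
      rwa [show d * u * v = u * (d * v) by ring]
    · rw [h] at h3
      refine Dv.trans ?_ (Dv.of_dvd hxa)
      have h4 : Dv P v 1 := by
        apply Dv.cancel hd0; rw [← hv, mul_one]; exact h3
      rw [hu]
      have := (h4.mul (hrefl (d * u)))
      rw [one_mul] at this
      rwa [show d * u * v = v * (d * u) by ring]
  · refine (Ideal.span_singleton_le_iff_mem _).2 ⟨?_, ?_⟩
    · exact Ideal.mem_span_singleton.2 ⟨v, by rw [hu]⟩
    · exact Ideal.mem_span_singleton.2 ⟨u, by rw [hv]; ring⟩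

lemma forward_fg (hD : s.IsIRKT)
    (H : ∀ a b : D, a ≠ 0 → b ≠ 0 → ∃ n : ℕ, 0 < n ∧
      (Ideal.span {a ^ n} ⊓ Ideal.span {b ^ n} : Ideal D).IsPrincipal)
    (J : Ideal D) (hJ : J.FG) : J ≠ ⊥ → ∃ n : ℕ, 0 < n ∧ ∃ d : D, d ≠ 0 ∧
      ∀ P, s.IsMaxStarIdeal P → PL P (J ^ n) d := by
  refine fg_ind (fun J => J ≠ ⊥ → ∃ n : ℕ, 0 < n ∧ ∃ d : D, d ≠ 0 ∧
      ∀ P, s.IsMaxStarIdeal P → PL P (J ^ n) d) (fun h => absurd rfl h) ?_ J hJ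
  intro J hJfg a ih hne
  by_cases ha : a = 0
  · subst ha
    simpa using ih (by simpa using hne)
  by_cases hJ0 : J = ⊥
  · subst hJ0
    refine ⟨1, one_pos, a, ha, fun P hP => ?_⟩
    haveI := max_prime s hP
    simpa using PL.span a
  obtain ⟨n, hn, d, hd, h⟩ := ih hJ0
  obtain ⟨m, hm, hpr⟩ := H d (a ^ n) hd (pow_ne_zero n ha)
  obtain ⟨c, hc⟩ := hpr.principal
  have hu0 : d ^ m ≠ 0 := pow_ne_zero m hd
  have hv0 : (a ^ n) ^ m ≠ 0 := pow_ne_zero m (pow_ne_zero n ha)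
  generalize hu : d ^ m = u at *
  generalize hv : (a ^ n) ^ m = v at *
  have hmem : ∀ x, (u ∣ x ∧ v ∣ x) ↔ c ∣ x := by
    intro x
    have : x ∈ (Ideal.span {u} ⊓ Ideal.span {v} : Ideal D) ↔ x ∈ Ideal.span {c} := by
      rw [hc]
    rwa [Submodule.mem_inf, Ideal.mem_span_singleton, Ideal.mem_span_singleton,
      Ideal.mem_span_singleton] at this
  obtain ⟨⟨c1, hc1⟩, ⟨c2, hc2⟩⟩ := (hmem c).2 dvd_rfl
  obtain ⟨e, he⟩ := (hmem (u * v)).1 ⟨dvd_mul_right _ _, dvd_mul_left _ _⟩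
  have huv : u * v ≠ 0 := mul_ne_zero hu0 hv0
  have hc0 : c ≠ 0 := by rintro rfl; simp at he; tauto
  have he0 : e ≠ 0 := by rintro rfl; simp at he; tauto
  have heu : e ∣ u := ⟨c2, mul_right_cancel₀ hv0 (by rw [he]; rw [mul_assoc, mul_comm c2, ← hc2, mul_comm])⟩
  have hev : e ∣ v := ⟨c1, mul_right_cancel₀ hu0 (by rw [mul_comm v u, he, mul_assoc, mul_comm c1, ← hc1, mul_comm])⟩
  have hDu : ∀ P, Dv P u v → Dv P u e := by
    rintro P ⟨t, ht, hdv⟩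
    refine ⟨t, ht, ?_⟩
    have h1 : c ∣ t * v := (hmem _).1 ⟨hdv, dvd_mul_left _ _⟩
    have h2 : c * u ∣ c * (t * e) := by
      have := mul_dvd_mul_right h1 u
      rwa [show t * v * u = t * (u * v) by ring, he, show t * (c * e) = c * (t * e) by ring] at this
    exact (mul_dvd_mul_iff_left hc0).1 h2
  have hDv' : ∀ P, Dv P v u → Dv P v e := by
    rintro P ⟨t, ht, hdv⟩
    refine ⟨t, ht, ?_⟩
    have h1 : c ∣ t * u := (hmem _).1 ⟨dvd_mul_left _ _, hdv⟩
    have h2 : c * v ∣ c * (t * e) := by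
      have := mul_dvd_mul_right h1 v
      rwa [show t * u * v = t * (u * v) by ring, he, show t * (c * e) = c * (t * e) by ring] at this
    exact (mul_dvd_mul_iff_left hc0).1 h2
  refine ⟨n * m, Nat.mul_pos hn hm, e, he0, ?_⟩
  intro P hP
  haveI := max_prime s hP
  haveI := valP s hD hP
  obtain ⟨y, hy⟩ := PL.exists_fg (P := P) J hJfg
  have h1 := (hy.pow n).dv (h P hP)
  have h2 := (h P hP).dv (hy.pow n)
  have h1' := h1.pow m
  have h2' := h2.pow m
  rw [hu] at h1' h2'
  rcases Dv.total (P := P) y a with hya | hya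
  · have h3 := (hy.sup_left hya).pow (n * m)
    rw [pow_mul y] at h3
    have h4 := (hya.pow n).pow m
    rw [hv] at h4
    exact h3.congr (h1'.trans (hDu P (h2'.trans h4))) ((Dv.of_dvd heu).trans h2')
  · have h3 := (hy.sup_right hya).pow (n * m)
    rw [pow_mul a, hv] at h3
    have h4 := (hya.pow n).pow m
    rw [hv] at h4
    exact h3.congr (hDv' P (h4.trans h1')) (Dv.of_dvd hev)

lemma forward (hs : s.FiniteCharacter) (hD : s.IsIRKT)
    (H : ∀ a b : D, a ≠ 0 → b ≠ 0 → ∃ n : ℕ, 0 < n ∧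
      (Ideal.span {a ^ n} ⊓ Ideal.span {b ^ n} : Ideal D).IsPrincipal)
    (A : Ideal D) (hA : s.IsSuperHomog A) : ∃ n : ℕ, 0 < n ∧ ∃ d : D,
      s.star ((A ^ n : Ideal D) : FractionalIdeal D⁰ K) =
        ((Ideal.span {d} : Ideal D) : FractionalIdeal D⁰ K) := by
  obtain ⟨J, hJ0, hJfg, hJ⟩ := hA.1.2.2.1
  obtain ⟨n, hn, d, hd, h⟩ := forward_fg s hD H J hJfg hJ0
  refine ⟨n, hn, d, PL.star_eq s hs hD (pow_ne_zero n hA.1.2.1.1) hd ?_⟩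
  intro P hP
  haveI := max_prime s hP
  haveI := valP s hD hP
  obtain ⟨y, hy⟩ := PL.exists_fg (P := P) J hJfg
  have h1 := (hy.pow n).dv (h P hP)
  have h2 := (h P hP).dv (hy.pow n)
  exact ((PL.star s hJ0 (PL.ne_zero hJ0 hy) hJ hy).pow n).congr h1 h2

end main

end StarAux

/-- A `*`-IRKT `D` is an AGCD domain iff for every `*`-super homogeneous
ideal `A` of `D` there is a positive integer `n` such that `(Aⁿ)^*` is principal. -/
theorem IRKT_AGCD_iff {D K : Type*} [CommRing D] [IsDomain D] [Field K]
    [Algebra D K] [IsFractionRing D K] (s : StarOperation D K) (hs : s.FiniteCharacter)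
    (hD : s.IsIRKT) :
    (∀ a b : D, a ≠ 0 → b ≠ 0 → ∃ n : ℕ, 0 < n ∧
      (Ideal.span {a ^ n} ⊓ Ideal.span {b ^ n} : Ideal D).IsPrincipal) ↔
    (∀ A : Ideal D, s.IsSuperHomog A → ∃ n : ℕ, 0 < n ∧ ∃ d : D,
      s.star ((A ^ n : Ideal D) : FractionalIdeal D⁰ K) =
        ((Ideal.span {d} : Ideal D) : FractionalIdeal D⁰ K)) := by
  exact ⟨fun H A hA => StarAux.forward s hs hD H A hA,
    fun H a b ha hb => StarAux.backward s hs hD H a b ha hb⟩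
end

section
/- The following are equivalent for an integral domain D: (1) for every nonzero nonunit x of D, xD is expressible as a *-product of finitely many *-af-homogeneous ideals; (2) D is an AGCD domain and a *-IRKT. -/
open scoped nonZeroDivisors

namespace StarOperation

variable {D K : Type*} [CommRing D] [IsDomain D] [Field K] [Algebra D K] [IsFractionRing D K]

/-- A `*`-homogeneous ideal `I` is `*`-af-homogeneous if for every `*`-ideal `J` of
finite type containing `I` there is a positive integer `n` with `(Jⁿ)^*` principal. -/
def IsAfHomog (s : StarOperation D K) (I : Ideal D) : Prop :=
  s.IsHomog I ∧ ∀ J : Ideal D, s.IsStarIdeal J → s.IsFiniteTypeStarIdeal J → I ≤ J →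
    ∃ n : ℕ, 0 < n ∧ ∃ d : D,
      s.star ((J ^ n : Ideal D) : FractionalIdeal D⁰ K) =
        ((Ideal.span {d} : Ideal D) : FractionalIdeal D⁰ K)

end StarOperation


/-- A finite character closure operation on the ideals of `D` commuting with scaling. -/
structure ClOp (D : Type*) [CommRing D] [IsDomain D] where
  c : Ideal D → Ideal D
  le : ∀ I, I ≤ c I
  mono : ∀ I J, I ≤ J → c I ≤ c J
  idem : ∀ I, c (c I) = c I
  smul : ∀ (a : D) (I : Ideal D), c (Ideal.span {a} * I) = Ideal.span {a} * c I
  fin : ∀ (I : Ideal D) (x : D), x ∈ c I → ∃ J : Ideal D, J.FG ∧ J ≤ I ∧ x ∈ c J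

namespace ClOp

variable {D : Type*} [CommRing D] [IsDomain D] (k : ClOp D)

lemma c_top : k.c ⊤ = ⊤ := top_le_iff.1 (k.le ⊤)

lemma c_span (a : D) : k.c (Ideal.span {a}) = Ideal.span {a} := by
  have := k.smul a ⊤
  rwa [k.c_top, Ideal.mul_top] at this

lemma c_le {I J : Ideal D} (h : I ≤ k.c J) : k.c I ≤ k.c J := by
  have := k.mono _ _ h
  rwa [k.idem] at this

lemma mul_c_le (I J : Ideal D) : I * k.c J ≤ k.c (I * J) := by
  rw [Ideal.mul_le]
  intro r hr t ht
  have h1 : r * t ∈ Ideal.span {r} * k.c J :=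
    Ideal.mul_mem_mul (Ideal.mem_span_singleton_self r) ht
  rw [← k.smul] at h1
  refine k.mono _ _ (Ideal.mul_mono_left ?_) h1
  rwa [Ideal.span_singleton_le_iff_mem]

lemma c_mul (I J : Ideal D) : k.c (I * k.c J) = k.c (I * J) :=
  le_antisymm (k.c_le (k.mul_c_le I J)) (k.mono _ _ (Ideal.mul_mono_right (k.le J)))

lemma c_mul' (I J : Ideal D) : k.c (k.c I * J) = k.c (I * J) := by
  rw [mul_comm, c_mul, mul_comm]

lemma c_pow (I : Ideal D) (n : ℕ) : k.c (k.c I ^ n) = k.c (I ^ n) := by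
  induction n with
  | zero => simp
  | succ n ih => rw [pow_succ, c_mul, ← c_mul', ih, c_mul', pow_succ]

lemma c_sup (I J : Ideal D) : k.c (I ⊔ k.c J) = k.c (I ⊔ J) :=
  le_antisymm (k.c_le (sup_le (le_sup_left.trans (k.le _)) (k.mono _ _ le_sup_right)))
    (k.mono _ _ (sup_le_sup_left (k.le J) _))

lemma c_sup' (I J : Ideal D) : k.c (k.c I ⊔ J) = k.c (I ⊔ J) := by
  rw [sup_comm, c_sup, sup_comm]

def Cl (I : Ideal D) : Prop := I ≠ ⊥ ∧ k.c I = I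

def FT (I : Ideal D) : Prop := ∃ J : Ideal D, J ≠ ⊥ ∧ J.FG ∧ k.c J = I

def Max (M : Ideal D) : Prop :=
  M ≠ ⊤ ∧ k.Cl M ∧ ∀ J : Ideal D, J ≠ ⊤ → k.Cl J → M ≤ J → J = M

def Homog (I : Ideal D) : Prop :=
  I ≠ ⊤ ∧ k.Cl I ∧ k.FT I ∧
    ∀ J J' : Ideal D, J ≠ ⊤ → J' ≠ ⊤ → k.Cl J → k.Cl J' →
      k.FT J → k.FT J' → I ≤ J → I ≤ J' → k.c (J ⊔ J') ≠ ⊤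

def Af (I : Ideal D) : Prop :=
  k.Homog I ∧ ∀ J : Ideal D, k.Cl J → k.FT J → I ≤ J →
    ∃ n : ℕ, 0 < n ∧ ∃ d : D, k.c (J ^ n) = Ideal.span {d}

variable {k}

lemma FT.c_eq {I : Ideal D} (h : k.FT I) : k.c I = I := by
  obtain ⟨J, -, -, rfl⟩ := h
  exact k.idem J

lemma FT.ne_bot {I : Ideal D} (h : k.FT I) : I ≠ ⊥ := by
  obtain ⟨J, h, -, rfl⟩ := h
  exact fun h' => h (le_bot_iff.1 (h' ▸ k.le J))

lemma FT.cl {I : Ideal D} (h : k.FT I) : k.Cl I := ⟨h.ne_bot, h.c_eq⟩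

lemma FT.sup {I J : Ideal D} (h : k.FT I) (h' : k.FT J) : k.FT (k.c (I ⊔ J)) := by
  obtain ⟨I, h1, h2, rfl⟩ := h
  obtain ⟨J, h3, h4, rfl⟩ := h'
  refine ⟨I ⊔ J, fun h => h1 (le_bot_iff.1 (h ▸ le_sup_left)), Submodule.FG.sup h2 h4, ?_⟩
  rw [c_sup, c_sup']

lemma FT.of_fg {I : Ideal D} (h : I ≠ ⊥) (h' : I.FG) : k.FT (k.c I) := ⟨I, h, h', rfl⟩

lemma FT.span {d : D} (h : d ≠ 0) : k.FT (Ideal.span {d}) :=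
  ⟨Ideal.span {d}, by simpa using h, ⟨{d}, by simp⟩, k.c_span d⟩

lemma exists_mul_of_le {d : D} (hd : d ≠ 0) {F : Ideal D} (hF : F.FG) (h : F ≤ Ideal.span {d}) :
    ∃ F' : Ideal D, F'.FG ∧ Ideal.span {d} * F' = F := by
  have key : Ideal.span {d} * (Submodule.comap (LinearMap.mul D D d) F : Ideal D) = F := by
    ext z
    rw [Ideal.mem_span_singleton_mul]
    constructor
    · rintro ⟨y, hy, rfl⟩
      exact hy
    · intro hz
      obtain ⟨y, rfl⟩ := Ideal.mem_span_singleton.1 (h hz)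
      exact ⟨y, hz, rfl⟩
  refine ⟨_, ?_, key⟩
  refine Submodule.fg_of_fg_map_injective (LinearMap.mul D D d) (mul_right_injective₀ hd) ?_
  have e : Submodule.map (LinearMap.mul D D d) (Submodule.comap (LinearMap.mul D D d) F) = F := by
    conv_rhs => rw [← key]
    ext z
    rw [Ideal.mem_span_singleton_mul]
    rfl
  rw [e]
  exact hF

/-- Division by an ideal a power of which is principal. -/
lemma div {A J : Ideal D} (hA : k.FT A) (hJ : k.FT J) (h : J ≤ A) {n : ℕ} (hn : 0 < n)
    {d : D} (hd : k.c (A ^ n) = Ideal.span {d}) :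
    ∃ J', k.FT J' ∧ k.c (A * J') = J ∧ ∀ N, N * A ≤ J → N ≤ J' := by
  obtain ⟨m, rfl⟩ : ∃ m, n = m + 1 := ⟨n - 1, by omega⟩
  have hd0 : d ≠ 0 := by
    rintro rfl
    have : A ^ (m+1) ≤ ⊥ := (k.le _).trans (by rw [hd]; simp)
    exact pow_ne_zero (m+1) hA.ne_bot (le_bot_iff.1 this)
  obtain ⟨F, hF0, hF, hFJ⟩ := id hJ
  obtain ⟨G, hG0, hG, hGA⟩ := id hA
  have e1 : k.c (J * A ^ m) = k.c (F * G ^ m) := by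
    rw [← hFJ, ← hGA, c_mul', ← c_mul, c_pow, c_mul]
  have h1 : F * G ^ m ≤ Ideal.span {d} := by
    refine (k.le _).trans ?_
    rw [← e1, ← hd, pow_succ']
    exact k.mono _ _ (Ideal.mul_mono_left h)
  obtain ⟨F', hF', e2⟩ := exists_mul_of_le hd0 (Submodule.FG.mul hF (Submodule.FG.pow hG m)) h1
  have hF'0 : F' ≠ ⊥ := by
    rintro rfl
    have : F * G ^ m = 0 := by rw [← e2]; simp
    rcases mul_eq_zero.1 this with h | h
    · exact hF0 h
    · exact pow_ne_zero m hG0 h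
  have e3 : k.c (J * A ^ m) = Ideal.span {d} * k.c F' := by rw [e1, ← e2, k.smul]
  refine ⟨k.c F', FT.of_fg hF'0 hF', ?_, fun N hN => ?_⟩
  · apply Ideal.span_singleton_mul_right_injective hd0
    show Ideal.span {d} * _ = Ideal.span {d} * _
    rw [← k.smul, mul_left_comm, ← e3, c_mul, mul_left_comm, ← pow_succ', ← c_mul, hd,
      mul_comm, k.smul, hJ.c_eq]
  · rw [← Ideal.span_singleton_mul_right_mono hd0, ← e3, mul_comm, ← hd]
    refine (k.mul_c_le _ _).trans (k.mono _ _ ?_)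
    rw [pow_succ', ← mul_assoc]
    exact Ideal.mul_mono_left hN

lemma exists_max {I : Ideal D} (h0 : I ≠ ⊥) (h : k.c I ≠ ⊤) : ∃ P, k.Max P ∧ I ≤ P := by
  obtain ⟨P, hP, hm⟩ := zorn_le_nonempty₀ {J : Ideal D | J ≠ ⊤ ∧ k.c J = J} (by
    intro C hC hch y hy
    have hdir : DirectedOn (· ≤ ·) C := hch.directedOn
    have hne : C.Nonempty := ⟨y, hy⟩
    refine ⟨sSup C, ⟨?_, ?_⟩, fun z hz => le_sSup hz⟩
    · intro h
      have : (1 : D) ∈ sSup C := by rw [h]; trivial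
      rw [Submodule.mem_sSup_of_directed hne hdir] at this
      obtain ⟨z, hz, h1⟩ := this
      exact (hC hz).1 ((Ideal.eq_top_iff_one _).2 h1)
    · refine le_antisymm (fun x hx => ?_) (k.le _)
      obtain ⟨F, hF, hFC, hxF⟩ := k.fin _ _ hx
      have hcomp := (Submodule.fg_iff_compact F).1 hF
      obtain ⟨z, hz, hFz⟩ :=
        (CompleteLattice.isCompactElement_iff_le_of_directed_sSup_le _ F).1 hcomp C hne hdir hFC
      have : x ∈ k.c z := k.mono _ _ hFz hxF
      rw [(hC hz).2] at this
      exact le_sSup hz this) (k.c I) ⟨h, k.idem I⟩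
  have hIP := (k.le I).trans hP
  refine ⟨P, ⟨hm.prop.1, ⟨fun h => h0 (le_bot_iff.1 (h ▸ hIP)), hm.prop.2⟩, ?_⟩, hIP⟩
  intro J hJ hJc hPJ
  exact le_antisymm (hm.le_of_ge ⟨hJ, hJc.2⟩ hPJ) hPJ

lemma Max.c_sup_eq_top {P I : Ideal D} (hP : k.Max P) (h : ¬ I ≤ P) : k.c (P ⊔ I) = ⊤ := by
  by_contra h'
  have hle : P ≤ k.c (P ⊔ I) := le_sup_left.trans (k.le _)
  have := hP.2.2 _ h' ⟨fun h0 => hP.2.1.1 (le_bot_iff.1 (h0 ▸ hle)), k.idem _⟩ hle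
  exact h (this ▸ le_sup_right.trans (k.le _))

lemma Max.isPrime {P : Ideal D} (hP : k.Max P) : P.IsPrime := by
  refine ⟨hP.1, fun {x y} hxy => ?_⟩
  by_contra! h
  have h1 := hP.c_sup_eq_top (I := Ideal.span {x}) (by simpa using h.1)
  apply h.2
  have : Ideal.span {y} * k.c (P ⊔ Ideal.span {x}) ≤ k.c P := by
    refine (k.mul_c_le _ _).trans (k.mono _ _ ?_)
    rw [Ideal.mul_sup]
    refine sup_le Ideal.mul_le_right ?_
    rw [Ideal.span_singleton_mul_span_singleton, Ideal.span_singleton_le_iff_mem, mul_comm]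
    exact hxy
  rw [h1, Ideal.mul_top, hP.2.1.2, Ideal.span_singleton_le_iff_mem] at this
  exact this

/-- If the conductor is not inside any maximal closed ideal, we get membership. -/
lemma mem_c_of_local {I : Ideal D} (hI : I ≠ ⊥) {z : D}
    (h : ∀ P, k.Max P → ∃ t, t ∉ P ∧ t * z ∈ I) : z ∈ k.c I := by
  set C : Ideal D := Submodule.comap (LinearMap.mul D D z) I with hC
  have hIC : I ≤ C := fun x hx => I.mul_mem_left z hx
  have hC0 : C ≠ ⊥ := fun h => hI (le_bot_iff.1 (h ▸ hIC))
  have htop : k.c C = ⊤ := by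
    by_contra h'
    obtain ⟨P, hP, hCP⟩ := exists_max hC0 h'
    obtain ⟨t, ht, h2⟩ := h P hP
    refine ht (hCP ?_)
    show z * t ∈ I
    rwa [mul_comm]
  have h3 : Ideal.span {z} * k.c C ≤ k.c I := by
    refine (k.mul_c_le _ _).trans (k.mono _ _ ?_)
    rw [Ideal.span_singleton_mul_le_iff]
    exact fun x hx => hx
  rw [htop, Ideal.mul_top, Ideal.span_singleton_le_iff_mem] at h3
  exact h3

/-- `a` divides `b` locally at `P`. -/
def LDvd (P : Ideal D) (a b : D) : Prop := ∃ t, t ∉ P ∧ a ∣ t * b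

def LTot (k : ClOp D) : Prop := ∀ P, k.Max P → ∀ a b : D, LDvd P a b ∨ LDvd P b a

lemma valuationRing_iff (P : Ideal D) [P.IsPrime] :
    ValuationRing (Localization.AtPrime P) ↔ ∀ a b : D, LDvd P a b ∨ LDvd P b a := by
  have aux : ∀ a b : D, (algebraMap D (Localization.AtPrime P) a ∣
      algebraMap D (Localization.AtPrime P) b) ↔ LDvd P a b := by
    intro a b
    rw [← Ideal.mem_span_singleton, ← Set.image_singleton, ← Ideal.map_span,
      IsLocalization.algebraMap_mem_map_algebraMap_iff P.primeCompl]
    simp [LDvd, Ideal.mem_span_singleton, Ideal.primeCompl]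
  rw [ValuationRing.iff_dvd_total]
  constructor
  · intro h a b
    simpa [aux] using h.total (algebraMap D (Localization.AtPrime P) a)
      (algebraMap D (Localization.AtPrime P) b)
  · intro h
    refine ⟨fun x y => ?_⟩
    obtain ⟨⟨a, u⟩, rfl⟩ := IsLocalization.mk'_surjective P.primeCompl x
    obtain ⟨⟨b, v⟩, rfl⟩ := IsLocalization.mk'_surjective P.primeCompl y
    have e : ∀ (a : D) (u : P.primeCompl), Associated (algebraMap D (Localization.AtPrime P) a)
        (IsLocalization.mk' (Localization.AtPrime P) a u) := by
      intro a u
      refine (Associated.symm ⟨(IsLocalization.map_units (Localization.AtPrime P) u).unit, ?_⟩)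
      simp
    rw [← (e a u).dvd_iff_dvd_left, ← (e b v).dvd_iff_dvd_right,
      ← (e b v).dvd_iff_dvd_left, ← (e a u).dvd_iff_dvd_right, aux, aux]
    exact h a b

/-- Powers of sums, up to closure. -/
lemma c_sup_pow (hv : k.LTot) {I J : Ideal D} (hI : I ≠ ⊥) (n : ℕ) :
    k.c ((I ⊔ J) ^ n) = k.c (I ^ n ⊔ J ^ n) := by
  refine le_antisymm (k.c_le ?_) (k.mono _ _ (sup_le (Ideal.pow_right_mono le_sup_left n)
    (Ideal.pow_right_mono le_sup_right n)))
  intro z hz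
  refine mem_c_of_local (fun h => pow_ne_zero n hI (le_bot_iff.1 (h ▸ le_sup_left))) fun P hP => ?_
  have := hP.isPrime
  have hV := (valuationRing_iff P).2 (hv P hP)
  have hm : algebraMap D (Localization.AtPrime P) z ∈
      (I ^ n ⊔ J ^ n).map (algebraMap D (Localization.AtPrime P)) := by
    have := Ideal.mem_map_of_mem (algebraMap D (Localization.AtPrime P)) hz
    rw [Ideal.map_pow, Ideal.map_sup] at this
    rw [Ideal.map_sup, Ideal.map_pow, Ideal.map_pow]
    rcases (ValuationRing.iff_ideal_total.1 hV).total (I.map (algebraMap D (Localization.AtPrime P)))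
      (J.map (algebraMap D (Localization.AtPrime P))) with h | h
    · rw [sup_eq_right.2 h] at this
      exact Ideal.mem_sup_right this
    · rw [sup_eq_left.2 h] at this
      exact Ideal.mem_sup_left this
  rw [IsLocalization.algebraMap_mem_map_algebraMap_iff P.primeCompl] at hm
  obtain ⟨t, ht, h⟩ := hm
  exact ⟨t, ht, h⟩

lemma exists_fg_of_le_sup {F P Q : Ideal D} (hF : F.FG) (h : F ≤ P ⊔ Q) :
    ∃ F₁ F₂ : Ideal D, F₁.FG ∧ F₂.FG ∧ F₁ ≤ P ∧ F₂ ≤ Q ∧ F ≤ F₁ ⊔ F₂ := by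
  classical
  obtain ⟨S, rfl⟩ := hF
  have h1 : ∀ x ∈ S, ∃ p q : D, p ∈ P ∧ q ∈ Q ∧ p + q = x := by
    intro x hx
    obtain ⟨p, hp, q, hq, e⟩ := Submodule.mem_sup.1 (h (Submodule.subset_span hx))
    exact ⟨p, q, hp, hq, e⟩
  choose! p q hp hq e using h1
  refine ⟨Ideal.span (S.image p : Finset D), Ideal.span (S.image q : Finset D), ⟨_, rfl⟩,
    ⟨_, rfl⟩, ?_, ?_, ?_⟩
  · rw [Ideal.span_le]
    intro x hx
    obtain ⟨y, hy, rfl⟩ := Finset.mem_image.1 (Finset.mem_coe.1 hx)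
    exact hp y hy
  · rw [Ideal.span_le]
    intro x hx
    obtain ⟨y, hy, rfl⟩ := Finset.mem_image.1 (Finset.mem_coe.1 hx)
    exact hq y hy
  · refine Submodule.span_le.2 fun x hx => ?_
    have hx' : x ∈ S := hx
    have hh := e x hx'
    rw [← hh]
    exact Submodule.add_mem_sup
      (Ideal.subset_span (Finset.mem_coe.2 (Finset.mem_image_of_mem p hx')))
      (Ideal.subset_span (Finset.mem_coe.2 (Finset.mem_image_of_mem q hx')))

lemma FT.sup_fg {I F : Ideal D} (h : k.FT I) (h' : F.FG) : k.FT (k.c (I ⊔ F)) := by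
  obtain ⟨I, h1, h2, rfl⟩ := h
  refine ⟨I ⊔ F, fun h => h1 (le_bot_iff.1 (h ▸ le_sup_left)), Submodule.FG.sup h2 h', ?_⟩
  rw [c_sup']

lemma Max.c_le' {P I : Ideal D} (hP : k.Max P) (h : I ≤ P) : k.c I ≤ P := by
  have := k.mono _ _ h
  rwa [hP.2.1.2] at this

lemma Max.c_ne_top {P I : Ideal D} (hP : k.Max P) (h : I ≤ P) : k.c I ≠ ⊤ := by
  intro h'
  have := hP.c_le' h
  rw [h', top_le_iff] at this
  exact hP.1 this

lemma Homog.unique {I P Q : Ideal D} (hI : k.Homog I) (hP : k.Max P) (hQ : k.Max Q)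
    (hIP : I ≤ P) (hIQ : I ≤ Q) : P = Q := by
  by_contra hne
  have h1 : ¬ Q ≤ P := fun h => hne (hQ.2.2 P hP.1 hP.2.1 h)
  have h2 := hP.c_sup_eq_top h1
  obtain ⟨F, hF, hFle, h1F⟩ := k.fin _ (1 : D) (by rw [h2]; trivial)
  obtain ⟨F₁, F₂, hF₁, hF₂, h3, h4, h5⟩ := exists_fg_of_le_sup hF hFle
  have e1 := hI.2.2.1.sup_fg hF₁
  have e2 := hI.2.2.1.sup_fg hF₂
  refine hI.2.2.2 _ _ (hP.c_ne_top (sup_le hIP h3)) (hQ.c_ne_top (sup_le hIQ h4)) e1.cl e2.cl e1 e2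
    (le_sup_left.trans (k.le _)) (le_sup_left.trans (k.le _)) ?_
  rw [Ideal.eq_top_iff_one]
  refine k.mono _ _ (h5.trans (sup_le_sup ?_ ?_)) h1F
  · exact le_sup_right.trans (k.le _)
  · exact le_sup_right.trans (k.le _)

lemma FT.exists_max {I : Ideal D} (hI : k.FT I) (h : I ≠ ⊤) : ∃ P, k.Max P ∧ I ≤ P :=
  ClOp.exists_max hI.ne_bot (by rwa [hI.c_eq])

lemma homog_of_unique {I : Ideal D} (hI : k.FT I) (htop : I ≠ ⊤)
    (h : ∀ P Q, k.Max P → k.Max Q → I ≤ P → I ≤ Q → P = Q) : k.Homog I := by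
  refine ⟨htop, hI.cl, hI, ?_⟩
  intro J J' hJ hJ' _ _ hf hf' hIJ hIJ'
  obtain ⟨P, hP, hJP⟩ := hf.exists_max hJ
  obtain ⟨Q, hQ, hJQ⟩ := hf'.exists_max hJ'
  obtain rfl := h P Q hP hQ (hIJ.trans hJP) (hIJ'.trans hJQ)
  exact hP.c_ne_top (sup_le hJP hJQ)

lemma c_mul_span {A B : Ideal D} {a b : D} (hA : k.c A = Ideal.span {a})
    (hB : k.c B = Ideal.span {b}) : k.c (A * B) = Ideal.span {a * b} := by
  rw [← c_mul, hB, ← c_mul', hA, Ideal.span_singleton_mul_span_singleton, c_span]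

lemma c_pow_span {A : Ideal D} {a : D} (hA : k.c A = Ideal.span {a}) (n : ℕ) :
    k.c (A ^ n) = Ideal.span {a ^ n} := by
  rw [← c_pow, hA, Ideal.span_singleton_pow, c_span]

/-- Every finite type closed ideal above a product of af-homogeneous ideals has a
principal power. -/
lemma power_principal (T : Multiset (Ideal D)) :
    (∀ I ∈ T, k.Af I) → ∀ J, k.FT J → T.prod ≤ J →
      ∃ n : ℕ, 0 < n ∧ ∃ d : D, k.c (J ^ n) = Ideal.span {d} := by
  induction T using Multiset.induction_on with
  | empty =>
    intro _ J _ hJ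
    refine ⟨1, one_pos, 1, ?_⟩
    have : J = ⊤ := by simpa using hJ
    rw [this, pow_one, c_top, Ideal.span_singleton_one]
  | cons I T ih =>
    intro hT J hJ hle
    rw [Multiset.prod_cons] at hle
    have hI := hT I (Multiset.mem_cons_self I T)
    have hFT := hJ.sup hI.1.2.2.1
    obtain ⟨n, hn, d, hd⟩ := hI.2 _ hFT.cl hFT (le_sup_right.trans (k.le _))
    obtain ⟨J', hJ', e, hN⟩ := div hFT hJ (le_sup_left.trans (k.le _)) hn hd
    have h1 : T.prod ≤ J' := by
      apply hN
      refine (k.mul_c_le _ _).trans ?_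
      conv_rhs => rw [← hJ.c_eq]
      refine k.mono _ _ ?_
      rw [Ideal.mul_sup, mul_comm _ I]
      exact sup_le Ideal.mul_le_right hle
    obtain ⟨m, hm, f, hf⟩ := ih (fun K hK => hT K (Multiset.mem_cons_of_mem hK)) J' hJ' h1
    refine ⟨n * m, Nat.mul_pos hn hm, d ^ m * f ^ n, ?_⟩
    rw [← e, c_pow, mul_pow]
    refine c_mul_span ?_ ?_
    · rw [pow_mul]
      exact c_pow_span hd m
    · rw [mul_comm, pow_mul]
      exact c_pow_span hf n

/-- Condition (1). -/
def AfSH (k : ClOp D) : Prop := ∀ x : D, x ≠ 0 → ¬IsUnit x →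
      ∃ T : Multiset (Ideal D), (∀ J ∈ T, k.Af J) ∧ k.c T.prod = Ideal.span {x}

lemma AfSH.power (h : k.AfSH) {J : Ideal D} (hJ : k.FT J) :
    ∃ n : ℕ, 0 < n ∧ ∃ d : D, k.c (J ^ n) = Ideal.span {d} := by
  by_cases ht : J = ⊤
  · exact ⟨1, one_pos, 1, by rw [ht, pow_one, c_top, Ideal.span_singleton_one]⟩
  · obtain ⟨a, ha, ha0⟩ := Submodule.exists_mem_ne_zero_of_ne_bot hJ.ne_bot
    obtain ⟨T, hT, e⟩ := h a ha0 (fun hu => ht (Ideal.eq_top_of_isUnit_mem _ ha hu))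
    refine power_principal T hT J hJ ((k.le _).trans ?_)
    rwa [e, Ideal.span_singleton_le_iff_mem]

lemma AfSH.ltot (h : k.AfSH) : k.LTot := by
  intro P hP a b
  have hp := hP.isPrime
  have h1P : (1 : D) ∉ P := fun h => hP.1 ((Ideal.eq_top_iff_one _).2 h)
  by_cases ha : a = 0
  · exact Or.inr ⟨1, h1P, by simp [ha]⟩
  set J : Ideal D := Ideal.span {a} ⊔ Ideal.span {b} with hJ
  have haJ : a ∈ J := Ideal.mem_sup_left (Ideal.mem_span_singleton_self a)
  have hbJ : b ∈ J := Ideal.mem_sup_right (Ideal.mem_span_singleton_self b)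
  have hJ0 : J ≠ ⊥ := fun h => ha (by rw [h] at haJ; simpa using haJ)
  have hJfg : J.FG := Submodule.FG.sup ⟨{a}, by simp⟩ ⟨{b}, by simp⟩
  obtain ⟨n, hn, d, hd⟩ := h.power (FT.of_fg (k := k) hJ0 hJfg)
  rw [c_pow] at hd
  obtain ⟨m, rfl⟩ : ∃ m, n = m + 1 := ⟨n - 1, by omega⟩
  have hle : J ^ (m + 1) ≤ Ideal.span {d} := hd ▸ k.le _
  have hd0 : d ≠ 0 := by
    rintro rfl
    exact pow_ne_zero (m+1) hJ0 (le_bot_iff.1 (hle.trans (by simp)))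
  have aux : ∀ u v y : D, u ∈ J → v ∈ J → y ∈ J ^ m → u * y ∉ Ideal.span {d} * P →
      LDvd P u v := by
    intro u v y hu hv hy hn
    obtain ⟨t, ht⟩ := Ideal.mem_span_singleton.1
      (hle (by rw [pow_succ']; exact Ideal.mul_mem_mul hu hy))
    obtain ⟨r, hr⟩ := Ideal.mem_span_singleton.1
      (hle (by rw [pow_succ']; exact Ideal.mul_mem_mul hv hy))
    refine ⟨t, fun htP => hn ?_, r, ?_⟩
    · rw [ht]
      exact Ideal.mul_mem_mul (Ideal.mem_span_singleton_self d) htP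
    · apply mul_left_cancel₀ hd0
      linear_combination (-v) * ht + u * hr
  by_contra! hcon
  have hA : J ^ (m + 1) ≤ Ideal.span {d} * P := by
    rw [pow_succ', hJ, Ideal.sup_mul, ← hJ]
    refine sup_le ?_ ?_
    · rw [Ideal.span_singleton_mul_le_iff]
      intro y hy
      by_contra hh
      exact hcon.1 (aux a b y haJ hbJ hy hh)
    · rw [Ideal.span_singleton_mul_le_iff]
      intro y hy
      by_contra hh
      exact hcon.2 (aux b a y hbJ haJ hy hh)
  have hB := k.mono _ _ hA
  rw [hd, k.smul, hP.2.1.2, Ideal.span_singleton_le_iff_mem, Ideal.mem_span_singleton_mul] at hB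
  obtain ⟨z, hz, e⟩ := hB
  have : z = 1 := mul_left_cancel₀ hd0 (by rw [e, mul_one])
  exact h1P (this ▸ hz)

lemma inf_principal {a b d : D} (ha : a ≠ 0)
    (h : k.c (Ideal.span {a} ⊔ Ideal.span {b}) = Ideal.span {d}) :
    (Ideal.span {a} ⊓ Ideal.span {b} : Ideal D).IsPrincipal := by
  have hle := h ▸ k.le (Ideal.span {a} ⊔ Ideal.span {b})
  obtain ⟨a', rfl⟩ := Ideal.mem_span_singleton.1
    (hle (Ideal.mem_sup_left (Ideal.mem_span_singleton_self a)))
  obtain ⟨b', rfl⟩ := Ideal.mem_span_singleton.1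
    (hle (Ideal.mem_sup_right (Ideal.mem_span_singleton_self b)))
  have hd0 : d ≠ 0 := left_ne_zero_of_mul ha
  refine ⟨d * a' * b', le_antisymm ?_ ?_⟩
  · rintro z ⟨hz1, hz2⟩
    obtain ⟨r, hr⟩ := Ideal.mem_span_singleton.1 hz1
    obtain ⟨q, hq⟩ := Ideal.mem_span_singleton.1 hz2
    have h1 : Ideal.span {z} * (Ideal.span {d * a'} ⊔ Ideal.span {d * b'}) ≤
        Ideal.span {(d * a') * (d * b')} := by
      rw [Ideal.mul_sup, Ideal.span_singleton_mul_span_singleton,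
        Ideal.span_singleton_mul_span_singleton]
      refine sup_le ?_ ?_
      · rw [Ideal.span_singleton_le_span_singleton]
        exact ⟨q, by rw [hq]; ring⟩
      · rw [Ideal.span_singleton_le_span_singleton]
        exact ⟨r, by rw [hr]; ring⟩
    have h2 := k.mono _ _ h1
    rw [k.smul, h, c_span, Ideal.span_singleton_mul_span_singleton,
      Ideal.span_singleton_le_span_singleton] at h2
    obtain ⟨w, hw⟩ := h2
    refine Ideal.mem_span_singleton.2 ⟨w, ?_⟩
    apply mul_left_cancel₀ hd0
    linear_combination hw
  · show Ideal.span {d * a' * b'} ≤ _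
    rw [Ideal.span_singleton_le_iff_mem]
    exact ⟨Ideal.mem_span_singleton.2 ⟨b', rfl⟩, Ideal.mem_span_singleton.2 ⟨a', by ring⟩⟩

lemma AfSH.agcd (h : k.AfSH) (a b : D) (ha : a ≠ 0) : ∃ n : ℕ, 0 < n ∧
    (Ideal.span {a ^ n} ⊓ Ideal.span {b ^ n} : Ideal D).IsPrincipal := by
  have hfg : (Ideal.span {a} ⊔ Ideal.span {b} : Ideal D).FG :=
    Submodule.FG.sup ⟨{a}, by simp⟩ ⟨{b}, by simp⟩
  have ha' : (Ideal.span {a} : Ideal D) ≠ ⊥ := by simpa using ha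
  obtain ⟨n, hn, d, hd⟩ := h.power (FT.of_fg (k := k)
    (fun h => ha' (le_bot_iff.1 (h ▸ le_sup_left))) hfg)
  rw [c_pow, c_sup_pow h.ltot ha', Ideal.span_singleton_pow, Ideal.span_singleton_pow] at hd
  exact ⟨n, hn, inf_principal (pow_ne_zero n ha) hd⟩

lemma AfSH.exists_le (h : k.AfSH) {x : D} (hx : x ≠ 0) (hu : ¬ IsUnit x) :
    ∃ T : Multiset (Ideal D), (∀ J ∈ T, k.Af J) ∧
      ∀ L : Ideal D, L.IsPrime → x ∈ L → ∃ J ∈ T, J ≤ L := by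
  obtain ⟨T, hT, e⟩ := h x hx hu
  refine ⟨T, hT, fun L hL hxL => ?_⟩
  have : T.prod ≤ L := (k.le _).trans (by rwa [e, Ideal.span_singleton_le_iff_mem])
  exact (hL.multiset_prod_le).1 this

lemma AfSH.finite (h : k.AfSH) (x : D) (hx : x ≠ 0) (hu : ¬ IsUnit x) :
    {P : Ideal D | k.Max P ∧ x ∈ P}.Finite := by
  classical
  obtain ⟨T, hT, hL⟩ := h.exists_le hx hu
  have : ∀ P : Ideal D, ∃ J, (k.Max P ∧ x ∈ P) → J ∈ T ∧ J ≤ P := by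
    intro P
    by_cases hP : k.Max P ∧ x ∈ P
    · obtain ⟨J, hJ, hJP⟩ := hL P hP.1.isPrime hP.2
      exact ⟨J, fun _ => ⟨hJ, hJP⟩⟩
    · exact ⟨⊥, fun h => absurd h hP⟩
  choose f hf using this
  refine Set.Finite.of_finite_image (f := f) ?_ ?_
  · refine T.toFinset.finite_toSet.subset ?_
    rintro _ ⟨P, hP, rfl⟩
    exact Finset.mem_coe.2 (Multiset.mem_toFinset.2 (hf P hP).1)
  · intro P hP Q hQ e
    refine (hT _ (hf P hP).1).1.unique hP.1 hQ.1 (hf P hP).2 ?_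
    rw [e]
    exact (hf Q hQ).2

lemma AfSH.indep (h : k.AfSH) (P Q : Ideal D) (hP : k.Max P) (hQ : k.Max Q) (hne : P ≠ Q)
    (L : Ideal D) (hL : L.IsPrime) (hL0 : L ≠ ⊥) : ¬(L ≤ P ⊓ Q) := by
  intro hle
  obtain ⟨x, hx, hx0⟩ := Submodule.exists_mem_ne_zero_of_ne_bot hL0
  obtain ⟨T, hT, hT'⟩ := h.exists_le hx0
    (fun hu => hL.ne_top (Ideal.eq_top_of_isUnit_mem _ hx hu))
  obtain ⟨J, hJ, hJL⟩ := hT' L hL hx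
  exact hne ((hT J hJ).1.unique hP hQ (hJL.trans (hle.trans inf_le_left))
    (hJL.trans (hle.trans inf_le_right)))

lemma inter {a b : D} (hb : b ≠ 0) (h : ∀ P, k.Max P → LDvd P b a) : b ∣ a := by
  rw [← Ideal.mem_span_singleton, ← k.c_span b]
  refine mem_c_of_local (by simpa using hb) fun P hP => ?_
  obtain ⟨t, ht, h⟩ := h P hP
  exact ⟨t, ht, Ideal.mem_span_singleton.2 h⟩


lemma pair_principal (hv : k.LTot) {a b : D} (ha : a ≠ 0) (hb : b ≠ 0)
    (h : (Ideal.span {a} ⊓ Ideal.span {b} : Ideal D).IsPrincipal) :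
    ∃ g, k.c (Ideal.span {a} ⊔ Ideal.span {b}) = Ideal.span {g} := by
  obtain ⟨m, hm⟩ := h
  have hm' : (Ideal.span {a} ⊓ Ideal.span {b} : Ideal D) = Ideal.span {m} := hm
  have hmm : m ∈ (Ideal.span {a} ⊓ Ideal.span {b} : Ideal D) := by
    rw [hm']; exact Ideal.mem_span_singleton_self m
  have hdiv : ∀ z, a ∣ z → b ∣ z → m ∣ z := by
    intro z h1 h2
    rw [← Ideal.mem_span_singleton, ← hm']
    exact ⟨Ideal.mem_span_singleton.2 h1, Ideal.mem_span_singleton.2 h2⟩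
  obtain ⟨a1, ha1⟩ := Ideal.mem_span_singleton.1 hmm.1
  obtain ⟨b1, hb1⟩ := Ideal.mem_span_singleton.1 hmm.2
  obtain ⟨g, hg⟩ := hdiv (a * b) (dvd_mul_right _ _) (dvd_mul_left _ _)
  have e1 : b = a1 * g := mul_left_cancel₀ ha (by rw [hg, ha1]; ring)
  have e2 : a = b1 * g := mul_left_cancel₀ hb (by rw [mul_comm b a, hg, hb1]; ring)
  refine ⟨g, le_antisymm ?_ ?_⟩
  · rw [← k.c_span g]
    refine k.mono _ _ (sup_le ?_ ?_)
    · rw [Ideal.span_singleton_le_span_singleton]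
      exact ⟨b1, by rw [mul_comm]; exact e2⟩
    · rw [Ideal.span_singleton_le_span_singleton]
      exact ⟨a1, by rw [mul_comm]; exact e1⟩
  · rw [Ideal.span_singleton_le_iff_mem]
    have ha' : (Ideal.span {a} : Ideal D) ≠ ⊥ := by simpa using ha
    refine mem_c_of_local (fun h => ha' (le_bot_iff.1 (h ▸ le_sup_left))) fun P hP => ?_
    rcases hv P hP a b with ⟨t, ht, h⟩ | ⟨t, ht, h⟩
    · refine ⟨t, ht, Ideal.mem_sup_left (Ideal.mem_span_singleton.2 ?_)⟩
      obtain ⟨s, hs⟩ := hdiv (t * b) h (dvd_mul_left _ _)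
      have : t = b1 * s := mul_left_cancel₀ hb (by rw [mul_comm b t, hs, hb1]; ring)
      refine ⟨s, ?_⟩
      rw [this, e2]; ring
    · refine ⟨t, ht, Ideal.mem_sup_right (Ideal.mem_span_singleton.2 ?_)⟩
      obtain ⟨s, hs⟩ := hdiv (t * a) (dvd_mul_left _ _) h
      have : t = a1 * s := mul_left_cancel₀ ha (by rw [mul_comm a t, hs, ha1]; ring)
      refine ⟨s, ?_⟩
      rw [this, e1]; ring

lemma fg_power (hv : k.LTot)
    (hg : ∀ a b : D, a ≠ 0 → b ≠ 0 → ∃ n : ℕ, 0 < n ∧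
        (Ideal.span {a ^ n} ⊓ Ideal.span {b ^ n} : Ideal D).IsPrincipal)
    (F : Ideal D) (hF : F.FG) : ∃ n : ℕ, 0 < n ∧ ∃ d : D, k.c (F ^ n) = Ideal.span {d} := by
  induction F, hF using Submodule.fg_induction with
  | singleton x =>
    refine ⟨1, one_pos, x, ?_⟩
    rw [pow_one]
    exact k.c_span x
  | sup I J hIfg hJfg hI hJ =>
    by_cases hI0 : I = ⊥
    · simpa [hI0] using hJ
    by_cases hJ0 : J = ⊥
    · simpa [hJ0] using hI
    obtain ⟨n, hn, d, hd⟩ := hI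
    obtain ⟨m, hm, e, he⟩ := hJ
    have ne : ∀ (I : Ideal D) (n : ℕ) (d : D), I ≠ ⊥ → k.c (I ^ n) = Ideal.span {d} → d ≠ 0 := by
      rintro I n d hI h rfl
      exact pow_ne_zero n hI (le_bot_iff.1 ((k.le _).trans (by rw [h]; simp)))
    have hd0 := ne I n d hI0 hd
    have he0 := ne J m e hJ0 he
    obtain ⟨r, hr, hprin⟩ := hg (d ^ m) (e ^ n) (pow_ne_zero _ hd0) (pow_ne_zero _ he0)
    obtain ⟨g, hg⟩ := pair_principal hv (pow_ne_zero _ (pow_ne_zero _ hd0))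
      (pow_ne_zero _ (pow_ne_zero _ he0)) hprin
    refine ⟨n * m * r, by positivity, g, ?_⟩
    rw [c_sup_pow hv hI0, ← c_sup, ← c_sup', ← hg]
    congr 2
    · rw [pow_mul, pow_mul]
      exact c_pow_span (c_pow_span hd m) r
    · rw [mul_comm n m, pow_mul, pow_mul]
      exact c_pow_span (c_pow_span he n) r

lemma FT.power' (hv : k.LTot)
    (hg : ∀ a b : D, a ≠ 0 → b ≠ 0 → ∃ n : ℕ, 0 < n ∧
        (Ideal.span {a ^ n} ⊓ Ideal.span {b ^ n} : Ideal D).IsPrincipal)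
    {J : Ideal D} (hJ : k.FT J) : ∃ n : ℕ, 0 < n ∧ ∃ d : D, k.c (J ^ n) = Ideal.span {d} := by
  obtain ⟨F, hF0, hF, rfl⟩ := hJ
  obtain ⟨n, hn, d, hd⟩ := fg_power hv hg F hF
  exact ⟨n, hn, d, by rw [c_pow, hd]⟩

/-- Splitting element. -/
lemma exists_split {P Q : Ideal D} (hP : P.IsPrime) (hQ : Q.IsPrime)
    (hind : ∀ L : Ideal D, L.IsPrime → L ≠ ⊥ → ¬(L ≤ P ⊓ Q)) {x : D} (hx : x ≠ 0) :
    ∃ u v, u ∉ P ∧ v ∉ Q ∧ x ∣ u * v := by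
  by_contra! hcon
  obtain ⟨L, hL, hxL, hdis⟩ := Ideal.exists_le_prime_disjoint (Ideal.span {x})
    (P.primeCompl ⊔ Q.primeCompl) (by
      rw [Set.disjoint_left]
      rintro z hz hz'
      obtain ⟨u, hu, v, hv, rfl⟩ := Submonoid.mem_sup.1 hz'
      exact hcon u v hu hv (Ideal.mem_span_singleton.1 hz))
  rw [Set.disjoint_left] at hdis
  refine hind L hL ?_ (le_inf ?_ ?_)
  · rintro rfl
    exact hx (by simpa using hxL)
  · intro z hz
    by_contra h
    exact hdis hz ((le_sup_left : P.primeCompl ≤ P.primeCompl ⊔ Q.primeCompl) h)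
  · intro z hz
    by_contra h
    exact hdis hz ((le_sup_right : Q.primeCompl ≤ P.primeCompl ⊔ Q.primeCompl) h)

lemma factor (hv : k.LTot)
    (hg : ∀ a b : D, a ≠ 0 → b ≠ 0 → ∃ n : ℕ, 0 < n ∧
        (Ideal.span {a ^ n} ⊓ Ideal.span {b ^ n} : Ideal D).IsPrincipal)
    (hfin : ∀ x : D, x ≠ 0 → ¬IsUnit x → {P : Ideal D | k.Max P ∧ x ∈ P}.Finite)
    (hind : ∀ P Q : Ideal D, k.Max P → k.Max Q → P ≠ Q →
      ∀ L : Ideal D, L.IsPrime → L ≠ ⊥ → ¬(L ≤ P ⊓ Q)) (N : ℕ) :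
    ∀ I : Ideal D, k.FT I → I ≠ ⊤ → {P : Ideal D | k.Max P ∧ I ≤ P}.ncard = N →
      ∃ T : Multiset (Ideal D), (∀ J ∈ T, k.Af J) ∧ k.c T.prod = I := by
  induction N using Nat.strong_induction_on with
  | _ N ih =>
  intro I hI htop hN
  obtain ⟨x, hxI, hx0⟩ := Submodule.exists_mem_ne_zero_of_ne_bot hI.ne_bot
  have hfinI : {P : Ideal D | k.Max P ∧ I ≤ P}.Finite :=
    (hfin x hx0 (fun hu => htop (Ideal.eq_top_of_isUnit_mem _ hxI hu))).subset
      fun P hP => ⟨hP.1, hP.2 hxI⟩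
  by_cases huniq : ∀ P Q, k.Max P → k.Max Q → I ≤ P → I ≤ Q → P = Q
  · refine ⟨{I}, ?_, by simpa using hI.c_eq⟩
    intro J hJ
    rw [Multiset.mem_singleton] at hJ
    subst hJ
    exact ⟨homog_of_unique hI htop huniq, fun J' _ hJ' _ => hJ'.power' hv hg⟩
  · push Not at huniq
    obtain ⟨P, Q, hP, hQ, hIP, hIQ, hne⟩ := huniq
    obtain ⟨u, v, hu, hvQ, huv⟩ := exists_split hP.isPrime hQ.isPrime (hind P Q hP hQ hne) hx0
    have hA : k.FT (k.c (I ⊔ Ideal.span {u})) := hI.sup_fg ⟨{u}, by simp⟩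
    set A := k.c (I ⊔ Ideal.span {u}) with hAdef
    have hIA : I ≤ A := le_sup_left.trans (k.le _)
    have huA : u ∈ A := k.le _ (Ideal.mem_sup_right (Ideal.mem_span_singleton_self u))
    obtain ⟨n, hn, d, hd⟩ := hA.power' hv hg
    obtain ⟨B, hB, hAB, hBmax⟩ := div hA hI hIA hn hd
    have hIB : I ≤ B := hBmax I Ideal.mul_le_left
    have hvB : v ∈ B := by
      rw [← Ideal.span_singleton_le_iff_mem]
      apply hBmax
      refine (k.mul_c_le _ _).trans ?_
      conv_rhs => rw [← hI.c_eq]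
      refine k.mono _ _ ?_
      rw [Ideal.mul_sup]
      refine sup_le Ideal.mul_le_right ?_
      rw [Ideal.span_singleton_mul_span_singleton, Ideal.span_singleton_le_iff_mem, mul_comm]
      exact Ideal.mem_of_dvd _ huv hxI
    have hABI : A * B ≤ I := (k.le _).trans hAB.le
    have hAP : ¬ A ≤ P := fun h => hu (h huA)
    have hBQ : ¬ B ≤ Q := fun h => hvQ (h hvB)
    have hBP : B ≤ P := (hP.isPrime.mul_le.1 (hABI.trans hIP)).resolve_left hAP
    have hAQ : A ≤ Q := (hQ.isPrime.mul_le.1 (hABI.trans hIQ)).resolve_right hBQ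
    have key : ∀ C R : Ideal D, I ≤ C → k.Max R → I ≤ R → ¬ C ≤ R →
        {P : Ideal D | k.Max P ∧ C ≤ P}.ncard < N := by
      intro C R hIC hR hIR hCR
      rw [← hN]
      refine Set.ncard_lt_ncard ?_ hfinI
      refine ⟨fun S hS => ⟨hS.1, hIC.trans hS.2⟩, fun hsub => ?_⟩
      exact hCR (hsub (a := R) ⟨hR, hIR⟩).2
    obtain ⟨T₁, hT₁, e₁⟩ := ih _ (key A P hIA hP hIP hAP) A hA
      (fun h => hQ.1 (top_le_iff.1 (h ▸ hAQ))) rfl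
    obtain ⟨T₂, hT₂, e₂⟩ := ih _ (key B Q hIB hQ hIQ hBQ) B hB
      (fun h => hP.1 (top_le_iff.1 (h ▸ hBP))) rfl
    refine ⟨T₁ + T₂, ?_, ?_⟩
    · intro J hJ
      rcases Multiset.mem_add.1 hJ with h | h
      · exact hT₁ J h
      · exact hT₂ J h
    · rw [Multiset.prod_add, ← c_mul, e₂, ← c_mul', e₁, hAB]

lemma afSH_of (hv : k.LTot)
    (hg : ∀ a b : D, a ≠ 0 → b ≠ 0 → ∃ n : ℕ, 0 < n ∧
        (Ideal.span {a ^ n} ⊓ Ideal.span {b ^ n} : Ideal D).IsPrincipal)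
    (hfin : ∀ x : D, x ≠ 0 → ¬IsUnit x → {P : Ideal D | k.Max P ∧ x ∈ P}.Finite)
    (hind : ∀ P Q : Ideal D, k.Max P → k.Max Q → P ≠ Q →
      ∀ L : Ideal D, L.IsPrime → L ≠ ⊥ → ¬(L ≤ P ⊓ Q)) : k.AfSH := by
  intro x hx hu
  exact factor hv hg hfin hind _ _ (FT.span hx)
    (fun h => hu (Ideal.span_singleton_eq_top.1 h)) rfl

end ClOp

namespace StarOperation

variable {D K : Type*} [CommRing D] [IsDomain D] [Field K] [Algebra D K] [IsFractionRing D K]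
variable (s : StarOperation D K)

open scoped Classical in
/-- The closure on integral ideals. -/
noncomputable def cIdeal (I : Ideal D) : Ideal D :=
  if I = ⊥ then ⊥ else
    Submodule.comap (Algebra.linearMap D K) (s.star (I : FractionalIdeal D⁰ K) : Submodule D K)

lemma cIdeal_bot : s.cIdeal ⊥ = ⊥ := by simp [cIdeal]

lemma star_one : s.star 1 = 1 := by
  have := s.star_spanSingleton 1 one_ne_zero
  rwa [FractionalIdeal.spanSingleton_one] at this

lemma star_coe_le_one {I : Ideal D} (hI : I ≠ ⊥) : s.star (I : FractionalIdeal D⁰ K) ≤ 1 := by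
  have := s.star_mono (I : FractionalIdeal D⁰ K) 1 (FractionalIdeal.coeIdeal_ne_zero.2 hI)
    one_ne_zero FractionalIdeal.coeIdeal_le_one
  rwa [s.star_one] at this

lemma coe_cIdeal {I : Ideal D} (hI : I ≠ ⊥) :
    ((s.cIdeal I : Ideal D) : FractionalIdeal D⁰ K) = s.star (I : FractionalIdeal D⁰ K) := by
  obtain ⟨J, hJ⟩ := FractionalIdeal.le_one_iff_exists_coeIdeal.1 (s.star_coe_le_one hI)
  rw [← hJ, FractionalIdeal.coeIdeal_inj]
  ext x
  simp only [cIdeal, if_neg hI, Submodule.mem_comap, Algebra.linearMap_apply, ← hJ]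
  rw [FractionalIdeal.mem_coe, FractionalIdeal.mem_coeIdeal]
  constructor
  · rintro ⟨y, hy, e⟩
    rwa [← IsFractionRing.injective D K e]
  · exact fun h => ⟨x, h, rfl⟩

lemma le_cIdeal (I : Ideal D) : I ≤ s.cIdeal I := by
  by_cases hI : I = ⊥
  · simp [hI]
  · rw [← FractionalIdeal.coeIdeal_le_coeIdeal K, s.coe_cIdeal hI]
    exact s.le_star _ (FractionalIdeal.coeIdeal_ne_zero.2 hI)

lemma cIdeal_ne_bot {I : Ideal D} (hI : I ≠ ⊥) : s.cIdeal I ≠ ⊥ :=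
  fun h => hI (le_bot_iff.1 (h ▸ s.le_cIdeal I))

/-- The star operation as a closure on integral ideals. -/
noncomputable def toCl (hs : s.FiniteCharacter) : ClOp D where
  c := s.cIdeal
  le := s.le_cIdeal
  mono I J h := by
    by_cases hI : I = ⊥
    · simp [hI, cIdeal_bot]
    · have hJ : J ≠ ⊥ := fun h' => hI (le_bot_iff.1 (h' ▸ h))
      rw [← FractionalIdeal.coeIdeal_le_coeIdeal K, s.coe_cIdeal hI, s.coe_cIdeal hJ]
      exact s.star_mono _ _ (FractionalIdeal.coeIdeal_ne_zero.2 hI)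
        (FractionalIdeal.coeIdeal_ne_zero.2 hJ) ((FractionalIdeal.coeIdeal_le_coeIdeal K).2 h)
  idem I := by
    by_cases hI : I = ⊥
    · simp [hI, cIdeal_bot]
    · rw [← FractionalIdeal.coeIdeal_inj (K := K), s.coe_cIdeal (s.cIdeal_ne_bot hI),
        s.coe_cIdeal hI]
      exact s.star_idem _ (FractionalIdeal.coeIdeal_ne_zero.2 hI)
  smul a I := by
    by_cases ha : a = 0
    · simp [ha, cIdeal_bot]
    by_cases hI : I = ⊥
    · simp [hI, cIdeal_bot]
    · have h : Ideal.span {a} * I ≠ ⊥ := by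
        rw [Ne, Ideal.mul_eq_bot]
        simp [ha, hI]
      rw [← FractionalIdeal.coeIdeal_inj (K := K), s.coe_cIdeal h, FractionalIdeal.coeIdeal_mul,
        FractionalIdeal.coeIdeal_mul, s.coe_cIdeal hI, FractionalIdeal.coeIdeal_span_singleton]
      exact s.star_smul _ _ (by simpa using ha) (FractionalIdeal.coeIdeal_ne_zero.2 hI)
  fin I x hx := by
    by_cases hI : I = ⊥
    · subst hI
      exact ⟨⊥, Submodule.fg_bot, le_rfl, hx⟩
    · have hx' : algebraMap D K x ∈ s.star (I : FractionalIdeal D⁰ K) := by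
        rw [← s.coe_cIdeal hI]
        exact FractionalIdeal.mem_coeIdeal_of_mem _ hx
      obtain ⟨J, hJ0, hJfg, hJI, hxJ⟩ := hs _ (FractionalIdeal.coeIdeal_ne_zero.2 hI) _ hx'
      obtain ⟨J', rfl⟩ := FractionalIdeal.le_one_iff_exists_coeIdeal.1
        (hJI.trans FractionalIdeal.coeIdeal_le_one)
      have hJ' := FractionalIdeal.coeIdeal_ne_zero.1 hJ0
      refine ⟨J', ?_, (FractionalIdeal.coeIdeal_le_coeIdeal K).1 hJI, ?_⟩
      · exact (FractionalIdeal.coeIdeal_fg D⁰ (IsFractionRing.injective D K) J').1 hJfg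
      · rw [← s.coe_cIdeal hJ', FractionalIdeal.mem_coeIdeal] at hxJ
        obtain ⟨y, hy, e⟩ := hxJ
        rwa [← IsFractionRing.injective D K e]

variable (hs : s.FiniteCharacter)

lemma star_eq_iff {I J : Ideal D} (hI : I ≠ ⊥) :
    s.star (I : FractionalIdeal D⁰ K) = (J : FractionalIdeal D⁰ K) ↔ (s.toCl hs).c I = J := by
  rw [← s.coe_cIdeal hI, FractionalIdeal.coeIdeal_inj]
  rfl

lemma star_eq_one_iff {I : Ideal D} (hI : I ≠ ⊥) :
    s.star (I : FractionalIdeal D⁰ K) = 1 ↔ (s.toCl hs).c I = ⊤ := by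
  rw [← s.star_eq_iff hs hI, FractionalIdeal.coeIdeal_top]

lemma isStarIdeal_iff (I : Ideal D) : s.IsStarIdeal I ↔ (s.toCl hs).Cl I := by
  unfold IsStarIdeal ClOp.Cl
  exact and_congr_right fun h => s.star_eq_iff hs h

lemma isFT_iff (I : Ideal D) : s.IsFiniteTypeStarIdeal I ↔ (s.toCl hs).FT I := by
  unfold IsFiniteTypeStarIdeal ClOp.FT
  exact exists_congr fun J => and_congr_right fun h => and_congr_right fun _ =>
    s.star_eq_iff hs h

lemma isMax_iff (I : Ideal D) : s.IsMaxStarIdeal I ↔ (s.toCl hs).Max I := by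
  unfold IsMaxStarIdeal ClOp.Max
  simp only [s.isStarIdeal_iff hs]

lemma isHomog_iff (I : Ideal D) : s.IsHomog I ↔ (s.toCl hs).Homog I := by
  unfold IsHomog ClOp.Homog
  simp only [s.isStarIdeal_iff hs, s.isFT_iff hs]
  refine and_congr_right fun _ => and_congr_right fun _ => and_congr_right fun _ =>
    forall_congr' fun J => forall_congr' fun J' => forall_congr' fun _ => forall_congr' fun _ =>
    forall_congr' fun h => forall_congr' fun _ => forall_congr' fun _ => forall_congr' fun _ =>
    forall_congr' fun _ => forall_congr' fun _ => not_congr ?_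
  exact s.star_eq_one_iff hs (I := J ⊔ J') fun h' => h.1 (le_bot_iff.1 (h' ▸ le_sup_left))

lemma isAf_iff (I : Ideal D) : s.IsAfHomog I ↔ (s.toCl hs).Af I := by
  unfold IsAfHomog ClOp.Af
  simp only [s.isHomog_iff hs, s.isStarIdeal_iff hs, s.isFT_iff hs]
  refine and_congr_right fun _ => forall_congr' fun J => forall_congr' fun h =>
    forall_congr' fun _ => forall_congr' fun _ => exists_congr fun n => and_congr_right fun _ =>
    exists_congr fun d => ?_
  exact s.star_eq_iff hs (pow_ne_zero n h.1)

lemma afSH_iff : (∀ x : D, x ≠ 0 → ¬IsUnit x →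
      ∃ T : Multiset (Ideal D), (∀ J ∈ T, s.IsAfHomog J) ∧
        s.star ((T.prod : Ideal D) : FractionalIdeal D⁰ K) =
          ((Ideal.span {x} : Ideal D) : FractionalIdeal D⁰ K)) ↔ (s.toCl hs).AfSH := by
  unfold ClOp.AfSH
  simp only [s.isAf_iff hs]
  refine forall_congr' fun x => forall_congr' fun hx => forall_congr' fun _ =>
    exists_congr fun T => and_congr_right fun hT => ?_
  refine s.star_eq_iff hs ?_
  intro h
  have h0 : (0 : Ideal D) ∈ T := Multiset.prod_eq_zero_iff.1 h
  exact (hT _ h0).1.2.1.1 rfl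

end StarOperation

/-- For an integral domain `D`, every principal ideal generated by a
nonzero nonunit is a `*`-product of finitely many `*`-af-homogeneous ideals iff `D` is
an AGCD domain and a `*`-IRKT. -/
theorem afSH_iff_AGCD_IRKT {D K : Type*} [CommRing D] [IsDomain D] [Field K]
    [Algebra D K] [IsFractionRing D K] (s : StarOperation D K) (hs : s.FiniteCharacter) :
    (∀ x : D, x ≠ 0 → ¬IsUnit x →
      ∃ T : Multiset (Ideal D), (∀ J ∈ T, s.IsAfHomog J) ∧
        s.star ((T.prod : Ideal D) : FractionalIdeal D⁰ K) =
          ((Ideal.span {x} : Ideal D) : FractionalIdeal D⁰ K)) ↔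
    ((∀ a b : D, a ≠ 0 → b ≠ 0 → ∃ n : ℕ, 0 < n ∧
        (Ideal.span {a ^ n} ⊓ Ideal.span {b ^ n} : Ideal D).IsPrincipal) ∧
      s.IsIRKT) := by
  rw [s.afSH_iff hs]
  constructor
  · intro h
    refine ⟨fun a b ha _ => h.agcd a b ha, ?_, ?_, ?_, ?_⟩
    · intro P _ hP
      exact (ClOp.valuationRing_iff P).2 (h.ltot P ((s.isMax_iff hs P).1 hP))
    · intro x hx
      obtain ⟨a, b, hb, rfl⟩ := IsFractionRing.div_surjective (A := D) x
      have hb0 : b ≠ 0 := nonZeroDivisors.ne_zero hb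
      have hbK : algebraMap D K b ≠ 0 := by simpa using hb0
      have hdvd : b ∣ a := by
        refine ClOp.inter (k := s.toCl hs) hb0 fun P hP => ?_
        obtain ⟨r, t, ht, e⟩ := hx P ((s.isMax_iff hs P).2 hP)
        refine ⟨t, ht, r, IsFractionRing.injective D K ?_⟩
        rw [map_mul, map_mul, ← e]
        field_simp
      obtain ⟨q, rfl⟩ := hdvd
      refine ⟨q, ?_⟩
      rw [map_mul]
      field_simp
    · intro x hx hu
      simpa only [s.isMax_iff hs] using h.finite x hx hu
    · intro P Q hP hQ
      exact h.indep P Q ((s.isMax_iff hs P).1 hP) ((s.isMax_iff hs Q).1 hQ)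
  · rintro ⟨hg, hV, -, hfin, hind⟩
    refine ClOp.afSH_of ?_ hg ?_ ?_
    · intro P hP
      have := hP.isPrime
      exact (ClOp.valuationRing_iff P).1 (hV P ((s.isMax_iff hs P).2 hP))
    · intro x hx hu
      simpa only [s.isMax_iff hs] using hfin x hx hu
    · intro P Q hP hQ
      exact hind P Q ((s.isMax_iff hs P).2 hP) ((s.isMax_iff hs Q).2 hQ)
end

section
/- For every nonzero nonunit x of D, xD is expressible as a *-product of finitely many *-f-homogeneous ideals if and only if D is a GCD domain and a *-IRKT. -/
open scoped nonZeroDivisors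

namespace StarOperation

variable {D K : Type*} [CommRing D] [IsDomain D] [Field K] [Algebra D K] [IsFractionRing D K]

/-- A `*`-homogeneous ideal `I` is `*`-f-homogeneous if every `*`-ideal of finite type
containing `I` is principal. -/
def IsFHomog (s : StarOperation D K) (I : Ideal D) : Prop :=
  s.IsHomog I ∧ ∀ J : Ideal D, s.IsStarIdeal J → s.IsFiniteTypeStarIdeal J → I ≤ J →
    J.IsPrincipal

end StarOperation

namespace FSHAux

set_option linter.unusedSectionVars false

variable {D : Type*} [CommRing D] [IsDomain D]

/-- Laws of a finite-character star operation restricted to integral ideals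
(extended by `⊥ ↦ ⊥`). -/
structure StAx (c : Ideal D → Ideal D) : Prop where
  le : ∀ I, I ≤ c I
  mono : ∀ I J, I ≤ J → c I ≤ c J
  idem : ∀ I, c (c I) = c I
  mul : ∀ x I, c (Ideal.span {x} * I) = Ideal.span {x} * c I
  fin : ∀ I, ∀ x ∈ c I, ∃ J : Ideal D, J.FG ∧ J ≤ I ∧ x ∈ c J

def MaxC (c : Ideal D → Ideal D) (P : Ideal D) : Prop :=
  P ≠ ⊤ ∧ P ≠ ⊥ ∧ c P = P ∧ ∀ J : Ideal D, J ≠ ⊤ → c J = J → P ≤ J → J = P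

def CFT (c : Ideal D → Ideal D) (J : Ideal D) : Prop :=
  ∃ I : Ideal D, I.FG ∧ I ≠ ⊥ ∧ c I = J

def FH (c : Ideal D → Ideal D) (I : Ideal D) : Prop :=
  I ≠ ⊤ ∧ I ≠ ⊥ ∧ CFT c I ∧
    (∀ J J', J ≠ ⊤ → J' ≠ ⊤ → CFT c J → CFT c J' → I ≤ J → I ≤ J' → c (J ⊔ J') ≠ ⊤) ∧
    ∀ J, CFT c J → I ≤ J → J.IsPrincipal

def Bez (c : Ideal D → Ideal D) : Prop :=
  ∀ a b : D, ∃ d, c (Ideal.span {a, b}) = Ideal.span {d}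

section
variable {c : Ideal D → Ideal D} (h : StAx c)
include h

theorem StAx.top : c ⊤ = ⊤ := top_le_iff.1 (h.le ⊤)

theorem StAx.single (x : D) : c (Ideal.span {x}) = Ideal.span {x} := by
  have := h.mul x ⊤
  rwa [h.top, Ideal.mul_top] at this

theorem StAx.le_of {I J : Ideal D} (hJ : c J = J) (hI : I ≤ J) : c I ≤ J :=
  hJ ▸ h.mono I J hI

theorem span_pair_mul' (d a b : D) :
    Ideal.span {d * a, d * b} = Ideal.span {d} * Ideal.span {a, b} := by
  rw [Ideal.span_insert, Ideal.span_insert a, Ideal.mul_sup,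
    Ideal.span_singleton_mul_span_singleton, Ideal.span_singleton_mul_span_singleton]

theorem StAx.euclid {a b z : D} (hab : c (Ideal.span {a, b}) = ⊤) (hd : a ∣ b * z) : a ∣ z := by
  have h1 : z ∈ Ideal.span {z} * c (Ideal.span {a, b}) := by
    rw [hab, Ideal.mul_top]; exact Ideal.mem_span_singleton_self z
  rw [← h.mul, ← span_pair_mul' h] at h1
  have h2 : Ideal.span {z * a, z * b} ≤ Ideal.span {a} := by
    rw [Ideal.span_le]
    rintro x (rfl | rfl)
    · exact Ideal.mem_span_singleton.2 (dvd_mul_left _ _)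
    · exact Ideal.mem_span_singleton.2 (by rwa [mul_comm])
  exact Ideal.mem_span_singleton.1 (h.le_of (h.single a) h2 h1)

theorem StAx.red {a b d : D} (hab : a ≠ 0 ∨ b ≠ 0) (hd : c (Ideal.span {a, b}) = Ideal.span {d}) :
    ∃ a' b', a = d * a' ∧ b = d * b' ∧ c (Ideal.span {a', b'}) = ⊤ := by
  have ha : a ∈ Ideal.span {d} := hd ▸ h.le _ (Ideal.subset_span (by simp))
  have hb : b ∈ Ideal.span {d} := hd ▸ h.le _ (Ideal.subset_span (by simp))
  obtain ⟨a', rfl⟩ := Ideal.mem_span_singleton.1 ha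
  obtain ⟨b', rfl⟩ := Ideal.mem_span_singleton.1 hb
  refine ⟨a', b', rfl, rfl, ?_⟩
  have hd0 : d ≠ 0 := by rintro rfl; simp at hab
  rw [span_pair_mul' h, h.mul] at hd
  have : d ∈ Ideal.span {d} * c (Ideal.span {a', b'}) := by
    rw [hd]; exact Ideal.mem_span_singleton_self d
  obtain ⟨z, hz, hz'⟩ := Ideal.mem_span_singleton_mul.1 this
  have : z = 1 := mul_left_cancel₀ hd0 (by rw [hz', mul_one])
  exact (Ideal.eq_top_iff_one _).2 (this ▸ hz)

theorem StAx.unred {a b d : D} (hab : c (Ideal.span {a, b}) = ⊤) :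
    c (Ideal.span {d * a, d * b}) = Ideal.span {d} := by
  rw [span_pair_mul' h, h.mul, hab, Ideal.mul_top]

theorem StAx.exists_max {I : Ideal D} (h0 : I ≠ ⊥) (hI : c I ≠ ⊤) : ∃ P, MaxC c P ∧ I ≤ P := by
  obtain ⟨m, hm, hmax⟩ := zorn_le_nonempty₀ {J : Ideal D | c J = J ∧ J ≠ ⊤} (by
    intro C hC hch y hy
    refine ⟨sSup C, ⟨le_antisymm ?_ (h.le _), ?_⟩, fun z hz => le_sSup hz⟩
    · intro x hx
      obtain ⟨J, hfg, hJ, hxJ⟩ := h.fin _ x hx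
      obtain ⟨Z, hZ, hJZ⟩ := (CompleteLattice.isCompactElement_iff_le_of_directed_sSup_le _ J).1
        ((Submodule.fg_iff_compact J).1 hfg) C ⟨y, hy⟩ hch.directedOn hJ
      exact le_sSup hZ (h.le_of (hC hZ).1 hJZ hxJ)
    · intro ht
      have h1 : (1 : D) ∈ sSup C := ht ▸ Submodule.mem_top
      obtain ⟨Z, hZ, h1Z⟩ := (Submodule.mem_sSup_of_directed ⟨y, hy⟩ hch.directedOn).1 h1
      exact (hC hZ).2 ((Ideal.eq_top_iff_one _).2 h1Z)) (c I) ⟨h.idem I, hI⟩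
  have hIm := (h.le I).trans hm
  refine ⟨m, ⟨hmax.1.2, ?_, hmax.1.1, fun J hJ hcJ hmJ => ?_⟩, hIm⟩
  · rintro rfl; exact h0 (le_bot_iff.1 hIm)
  · exact le_antisymm (hmax.2 ⟨hcJ, hJ⟩ hmJ) hmJ

theorem StAx.max_top {P : Ideal D} (hP : MaxC c P) {I : Ideal D} (hI : ¬ I ≤ P) :
    c (P ⊔ I) = ⊤ := by
  by_contra hne
  have := hP.2.2.2 _ hne (h.idem _) (le_sup_left.trans (h.le _))
  exact hI (this ▸ le_sup_right.trans (h.le _))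

theorem StAx.max_prime {P : Ideal D} (hP : MaxC c P) : P.IsPrime := by
  refine ⟨hP.1, fun {a b} hab => ?_⟩
  by_contra hcon
  push Not at hcon
  have h1 := h.max_top hP (I := Ideal.span {a}) (by simpa [Ideal.span_le] using hcon.1)
  have h2 : b ∈ Ideal.span {b} * c (P ⊔ Ideal.span {a}) := by
    rw [h1, Ideal.mul_top]; exact Ideal.mem_span_singleton_self b
  rw [← h.mul] at h2
  refine hcon.2 (h.le_of hP.2.2.1 ?_ h2)
  rw [Ideal.mul_sup, Ideal.span_singleton_mul_span_singleton]
  refine sup_le Ideal.mul_le_right ?_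
  rw [Ideal.span_singleton_le_iff_mem, mul_comm]; exact hab

theorem StAx.pair_not_le {P : Ideal D} (hP : MaxC c P) {a b : D}
    (hab : c (Ideal.span {a, b}) = ⊤) : ¬ (a ∈ P ∧ b ∈ P) := by
  rintro ⟨ha, hb⟩
  apply hP.1
  rw [← top_le_iff, ← hab]
  refine h.le_of hP.2.2.1 ?_
  rw [Ideal.span_le]
  rintro x (rfl | rfl) <;> assumption

theorem StAx.bez_fg (hB : Bez c) {J : Ideal D} (hJ : J.FG) : ∃ d, c J = Ideal.span {d} := by
  induction J, hJ using Submodule.fg_induction with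
  | singleton x => exact ⟨x, h.single x⟩
  | sup M₁ M₂ _ _ h₁ h₂ =>
    obtain ⟨d₁, h₁⟩ := h₁
    obtain ⟨d₂, h₂⟩ := h₂
    obtain ⟨d, hd⟩ := hB d₁ d₂
    refine ⟨d, hd ▸ ?_⟩
    rw [Ideal.span_insert, ← h₁, ← h₂]
    apply le_antisymm
    · exact h.mono _ _ (sup_le_sup (h.le _) (h.le _))
    · refine h.le_of (h.idem _) (sup_le (h.mono _ _ le_sup_left) (h.mono _ _ le_sup_right))

theorem FH.gcd {x : D} (hx : FH c (Ideal.span {x})) (b : D) :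
    ∃ d, c (Ideal.span {x, b}) = Ideal.span {d} := by
  have hle : Ideal.span {x} ≤ Ideal.span {x, b} := Ideal.span_mono (by simp)
  have := hx.2.2.2.2 (c (Ideal.span {x, b})) ⟨_, Submodule.fg_span (by simp), fun h0 => hx.2.1
    (le_bot_iff.1 (h0 ▸ hle)), rfl⟩ (hle.trans (h.le _))
  obtain ⟨d, hd⟩ := this
  exact ⟨d, hd⟩

/-- the factorization hypothesis in element form -/
theorem StAx.elem {T : Multiset (Ideal D)} (hT : ∀ J ∈ T, FH c J) :
    ∃ S : Multiset D, (∀ y ∈ S, FH c (Ideal.span {y})) ∧ T.prod = Ideal.span {S.prod} := by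
  induction T using Multiset.induction_on with
  | empty => exact ⟨0, by simp⟩
  | cons J T ih =>
    obtain ⟨S, hS, hp⟩ := ih fun I hI => hT I (Multiset.mem_cons_of_mem hI)
    have hJ := hT J (Multiset.mem_cons_self _ _)
    obtain ⟨y, rfl⟩ := hJ.2.2.2.2 J hJ.2.2.1 le_rfl
    refine ⟨y ::ₘ S, ?_, ?_⟩
    · intro z hz
      rcases Multiset.mem_cons.1 hz with rfl | hz
      · exact hJ
      · exact hS z hz
    · rw [Multiset.prod_cons, Multiset.prod_cons, hp, ← Ideal.span_singleton_mul_span_singleton]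

theorem StAx.bez_of (S : Multiset D) (hS : ∀ y ∈ S, FH c (Ideal.span {y})) (b : D) :
    ∃ d, c (Ideal.span {S.prod, b}) = Ideal.span {d} := by
  induction S using Multiset.induction_on generalizing b with
  | empty =>
    refine ⟨1, ?_⟩
    rw [Ideal.span_singleton_one, Multiset.prod_zero, ← top_le_iff]
    refine le_trans ?_ (h.le _)
    rw [← Ideal.span_singleton_one]
    exact Ideal.span_mono (by simp)
  | cons y S ih =>
    have hy := hS y (Multiset.mem_cons_self _ _)
    have hy0 : y ≠ 0 := by rintro rfl; exact hy.2.1 (by simp)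
    obtain ⟨d, hd⟩ := FH.gcd h hy b
    obtain ⟨y', b', rfl, rfl, hc⟩ := h.red (Or.inl hy0) hd
    obtain ⟨e, he⟩ := ih (fun z hz => hS z (Multiset.mem_cons_of_mem hz)) b'
    refine ⟨d * e, ?_⟩
    rw [Multiset.prod_cons, mul_assoc, span_pair_mul' h, h.mul,
      ← Ideal.span_singleton_mul_span_singleton, ← he]
    congr 1
    apply le_antisymm
    · apply h.mono
      rw [Ideal.span_le]
      rintro x (rfl | rfl)
      · exact Ideal.mul_mem_left _ _ (Ideal.subset_span (by simp))
      · exact Ideal.subset_span (by simp)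
    · refine h.le_of (h.idem _) ?_
      rw [Ideal.span_le]
      rintro x (rfl | rfl)
      · have h1 : S.prod ∈ Ideal.span {S.prod} * c (Ideal.span {y', b'}) := by
          rw [hc, Ideal.mul_top]; exact Ideal.mem_span_singleton_self _
        rw [← h.mul, ← span_pair_mul' h] at h1
        refine h.mono _ _ ?_ h1
        rw [Ideal.span_le]
        rintro x (rfl | rfl)
        · rw [mul_comm]; exact Ideal.subset_span (by simp)
        · exact Ideal.mul_mem_left _ _ (Ideal.subset_span (by simp))
      · exact h.le _ (Ideal.subset_span (by simp))

/-- A homogeneous element lies in at most one maximal star ideal. -/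
theorem StAx.unique_max {x : D} (hx : FH c (Ideal.span {x})) {P Q : Ideal D} (hP : MaxC c P)
    (hQ : MaxC c Q) (hxP : x ∈ P) (hxQ : x ∈ Q) : P = Q := by
  by_contra hne
  have hPQ : ¬ P ≤ Q := fun hle => hne (hP.2.2.2 Q hQ.1 hQ.2.2.1 hle).symm
  obtain ⟨a, haP, haQ⟩ := Set.not_subset.1 hPQ
  have h1 := h.max_top hQ (I := Ideal.span {a}) (by simpa [Ideal.span_le] using haQ)
  obtain ⟨J, hfg, hJ, h1J⟩ := h.fin _ 1 (h1 ▸ Submodule.mem_top)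
  -- split the finitely generated ideal J
  have key : ∃ J' : Ideal D, J'.FG ∧ J' ≤ Q ∧ J ≤ J' ⊔ Ideal.span {a} := by
    clear h1J
    induction J, hfg using Submodule.fg_induction with
    | singleton z =>
      obtain ⟨q, hq, r, hr, hqr⟩ := Submodule.mem_sup.1 (hJ (Submodule.mem_span_singleton_self z))
      refine ⟨Ideal.span {q}, ⟨{q}, by simp⟩, by simpa [Ideal.span_le] using hq, ?_⟩
      rw [Submodule.span_singleton_le_iff_mem]
      exact Submodule.mem_sup.2 ⟨q, Ideal.mem_span_singleton_self q, r, hr, hqr⟩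
    | sup M₁ M₂ _ _ h₁ h₂ =>
      obtain ⟨J₁, f₁, l₁, k₁⟩ := h₁ (le_sup_left.trans hJ)
      obtain ⟨J₂, f₂, l₂, k₂⟩ := h₂ (le_sup_right.trans hJ)
      refine ⟨J₁ ⊔ J₂, Submodule.FG.sup f₁ f₂, sup_le l₁ l₂, sup_le (k₁.trans ?_) (k₂.trans ?_)⟩
      · exact sup_le_sup_right le_sup_left _
      · exact sup_le_sup_right le_sup_right _
  obtain ⟨J', hfg', hJ'Q, hJJ'⟩ := key
  have hx0 : x ≠ 0 := by rintro rfl; exact hx.2.1 (by simp)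
  have hnb : ∀ I : Ideal D, I ⊔ Ideal.span {x} ≠ ⊥ := by
    intro I hI
    have : x ∈ I ⊔ Ideal.span {x} := le_sup_right (a := I) (Ideal.mem_span_singleton_self x)
    rw [hI] at this
    exact hx0 this
  have sfg : ∀ y : D, (Ideal.span {y}).FG := fun y => ⟨{y}, by simp⟩
  have hpr : ∀ {I R : Ideal D}, I ≤ R → x ∈ R → MaxC c R → c (I ⊔ Ideal.span {x}) ≠ ⊤ := by
    intro I R hIR hxR hR ht
    apply hR.1
    rw [← top_le_iff, ← ht]
    exact h.le_of hR.2.2.1 (sup_le hIR (by simpa [Ideal.span_le] using hxR))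
  refine hx.2.2.2.1 (c (J' ⊔ Ideal.span {x})) (c (Ideal.span {a} ⊔ Ideal.span {x}))
    (hpr hJ'Q hxQ hQ) (hpr (by simpa [Ideal.span_le] using haP) hxP hP)
    ⟨_, Submodule.FG.sup hfg' (sfg x), hnb _, rfl⟩ ⟨_, Submodule.FG.sup (sfg a) (sfg x), hnb _, rfl⟩
    (le_sup_right.trans (h.le _)) (le_sup_right.trans (h.le _)) ?_
  rw [Ideal.eq_top_iff_one]
  refine h.mono _ _ (hJJ'.trans ?_) h1J
  exact sup_le_sup (le_sup_left.trans (h.le _)) (le_sup_left.trans (h.le _))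

theorem StAx.forward
    (H : ∀ x : D, x ≠ 0 → ¬ IsUnit x → ∃ T : Multiset (Ideal D), (∀ J ∈ T, FH c J) ∧
      c T.prod = Ideal.span {x}) :
    (∀ a b : D, a ≠ 0 → b ≠ 0 → (Ideal.span {a} ⊓ Ideal.span {b} : Ideal D).IsPrincipal) ∧
    (∀ P, MaxC c P → ∀ a b : D, ∃ t, t ∉ P ∧ (a ∣ b * t ∨ b ∣ a * t)) ∧
    (∀ a b : D, b ≠ 0 → (∀ P, MaxC c P → ∃ t, t ∉ P ∧ b ∣ a * t) → b ∣ a) ∧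
    (∀ x : D, x ≠ 0 → ¬ IsUnit x → {P : Ideal D | MaxC c P ∧ x ∈ P}.Finite) ∧
    (∀ P Q : Ideal D, MaxC c P → MaxC c Q → P ≠ Q →
      ∀ L : Ideal D, L.IsPrime → L ≠ ⊥ → ¬(L ≤ P ⊓ Q)) := by
  have HS : ∀ x : D, x ≠ 0 → ¬ IsUnit x → ∃ S : Multiset D, (∀ y ∈ S, FH c (Ideal.span {y})) ∧
      Associated S.prod x := by
    intro x hx hu
    obtain ⟨T, hT, hp⟩ := H x hx hu
    obtain ⟨S, hS, hq⟩ := h.elem hT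
    refine ⟨S, hS, ?_⟩
    rw [hq, h.single] at hp
    exact Ideal.span_singleton_eq_span_singleton.1 hp
  have hB : Bez c := by
    intro a b
    by_cases ha : a = 0
    · refine ⟨b, ?_⟩
      subst ha
      have : (Ideal.span {0, b} : Ideal D) = Ideal.span {b} := by
        rw [Ideal.span_insert]; simp
      rw [this, h.single]
    by_cases hu : IsUnit a
    · refine ⟨1, ?_⟩
      have : (Ideal.span {a, b} : Ideal D) = ⊤ :=
        Ideal.eq_top_of_isUnit_mem _ (Ideal.subset_span (by simp)) hu
      rw [this, h.top, Ideal.span_singleton_one]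
    obtain ⟨S, hS, hp⟩ := HS a ha hu
    obtain ⟨d, hd⟩ := h.bez_of S hS b
    refine ⟨d, ?_⟩
    rw [Ideal.span_insert, ← Ideal.span_singleton_eq_span_singleton.2 hp, ← Ideal.span_insert, hd]
  refine ⟨?_, ?_, ?_, ?_, ?_⟩
  · intro a b ha hb
    obtain ⟨d, hd⟩ := hB a b
    obtain ⟨a', b', rfl, rfl, hc⟩ := h.red (Or.inl ha) hd
    refine ⟨d * a' * b', ?_⟩
    apply le_antisymm
    · rintro x ⟨hx1, hx2⟩
      obtain ⟨y, rfl⟩ := Ideal.mem_span_singleton.1 hx1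
      obtain ⟨z, hz⟩ := Ideal.mem_span_singleton.1 hx2
      have hd0 : d ≠ 0 := left_ne_zero_of_mul ha
      have h1 : a' * y = b' * z := mul_left_cancel₀ hd0 (by rw [← mul_assoc, hz, mul_assoc])
      obtain ⟨w, rfl⟩ := h.euclid hc ⟨y, h1.symm⟩
      refine Ideal.mem_span_singleton.2 ⟨w, ?_⟩
      rw [hz]; ring
    · refine (Ideal.span_singleton_le_iff_mem _).2 ⟨?_, ?_⟩
      · exact Ideal.mem_span_singleton.2 ⟨b', rfl⟩
      · exact Ideal.mem_span_singleton.2 ⟨a', by ring⟩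
  · intro P hP a b
    by_cases ha : a = 0
    · exact ⟨1, fun h1 => hP.1 ((Ideal.eq_top_iff_one _).2 h1), Or.inr (by simp [ha])⟩
    obtain ⟨d, hd⟩ := hB a b
    obtain ⟨a', b', rfl, rfl, hc⟩ := h.red (Or.inl ha) hd
    have := h.pair_not_le hP hc
    by_cases ha' : a' ∈ P
    · exact ⟨b', fun hb => this ⟨ha', hb⟩, Or.inr ⟨a', by ring⟩⟩
    · exact ⟨a', ha', Or.inl ⟨b', by ring⟩⟩
  · intro a b hb hloc
    obtain ⟨d, hd⟩ := hB a b
    obtain ⟨a', b', rfl, rfl, hc⟩ := h.red (Or.inr hb) hd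
    have hd0 : d ≠ 0 := left_ne_zero_of_mul hb
    have hb0 : b' ≠ 0 := right_ne_zero_of_mul hb
    by_cases hu : IsUnit b'
    · exact mul_dvd_mul_left d hu.dvd
    exfalso
    obtain ⟨P, hP, hbP⟩ := h.exists_max (I := Ideal.span {b'}) (by simpa using hb0)
      (by rw [h.single]; simpa [Ideal.span_singleton_eq_top] using hu)
    obtain ⟨t, ht, hdiv⟩ := hloc P hP
    rw [mul_assoc] at hdiv
    have h1 : b' ∣ a' * t := (mul_dvd_mul_iff_left hd0).1 hdiv
    have h2 : b' ∣ t := h.euclid (by rw [Set.pair_comm]; exact hc) h1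
    exact ht (hbP (Ideal.mem_span_singleton.2 h2))
  · intro x hx hu
    obtain ⟨S, hS, hp⟩ := HS x hx hu
    classical
    refine Set.Finite.subset (s := ⋃ y ∈ S.toFinset, {P : Ideal D | MaxC c P ∧ y ∈ P}) ?_ ?_
    · refine Set.Finite.biUnion (Finset.finite_toSet _) fun y hy => ?_
      refine Set.Subsingleton.finite ?_
      rintro P ⟨hP, hyP⟩ Q ⟨hQ, hyQ⟩
      exact h.unique_max (hS y (Multiset.mem_toFinset.1 hy)) hP hQ hyP hyQ
    · rintro P ⟨hP, hxP⟩
      have hpr := h.max_prime hP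
      have : S.prod ∈ P := P.mem_of_dvd hp.symm.dvd hxP
      obtain ⟨y, hy, hyP⟩ := hpr.multiset_prod_mem_iff_exists_mem S |>.1 this
      simp only [Set.mem_iUnion]
      exact ⟨y, Multiset.mem_toFinset.2 hy, hP, hyP⟩
  · intro P Q hP hQ hne L hL hL0 hle
    obtain ⟨x, hxL, hx0⟩ := Submodule.exists_mem_ne_zero_of_ne_bot hL0
    have hu : ¬ IsUnit x := fun hu => hL.ne_top (Ideal.eq_top_of_isUnit_mem _ hxL hu)
    obtain ⟨S, hS, hp⟩ := HS x hx0 hu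
    obtain ⟨y, hy, hyL⟩ := hL.multiset_prod_mem_iff_exists_mem S |>.1
      (L.mem_of_dvd hp.symm.dvd hxL)
    exact hne (h.unique_max (hS y hy) hP hQ (hle hyL).1 (hle hyL).2)

omit h in
theorem gcd_red (G : ∀ a b : D, a ≠ 0 → b ≠ 0 →
      (Ideal.span {a} ⊓ Ideal.span {b} : Ideal D).IsPrincipal) (a b : D) (ha : a ≠ 0) (hb : b ≠ 0) :
    ∃ d v u, a = d * v ∧ b = d * u ∧ (∀ t, v ∣ u * t → v ∣ t) ∧ (∀ t, u ∣ v * t → u ∣ t) := by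
  obtain ⟨m, hm⟩ := G a b ha hb
  have hmem : ∀ x, a ∣ x → b ∣ x → m ∣ x := fun x h1 h2 => by
    have : x ∈ Ideal.span {a} ⊓ Ideal.span {b} :=
      ⟨Ideal.mem_span_singleton.2 h1, Ideal.mem_span_singleton.2 h2⟩
    rw [hm] at this
    exact Ideal.mem_span_singleton.1 this
  have hmm : m ∈ Ideal.span {a} ⊓ Ideal.span {b} := hm ▸ Submodule.mem_span_singleton_self m
  obtain ⟨u, hu⟩ := Ideal.mem_span_singleton.1 hmm.1
  obtain ⟨v, hv⟩ := Ideal.mem_span_singleton.1 hmm.2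
  obtain ⟨d, hd⟩ := hmem (a * b) (dvd_mul_right _ _) (dvd_mul_left _ _)
  have hbu : b = d * u := mul_left_cancel₀ ha (by rw [hd, hu]; ring)
  have hav : a = d * v := mul_right_cancel₀ hb (by rw [hd, hv]; ring)
  have hu0 : u ≠ 0 := by rintro rfl; simp [hb] at hbu
  refine ⟨d, v, u, hav, hbu, ?_, ?_⟩
  · rintro t ⟨w, hw⟩
    obtain ⟨k, hk⟩ := hmem (b * t) ⟨w, by rw [hbu, hav, mul_assoc, hw]; ring⟩ (dvd_mul_right _ _)
    exact ⟨k, mul_left_cancel₀ hb (by rw [hk, hv]; ring)⟩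
  · rintro t ⟨w, hw⟩
    obtain ⟨k, hk⟩ := hmem (a * t) (dvd_mul_right _ _) ⟨w, by rw [hbu, hav, mul_assoc, hw]; ring⟩
    exact ⟨k, mul_left_cancel₀ ha (by rw [hk, hu]; ring)⟩

theorem StAx.backward
    (G : ∀ a b : D, a ≠ 0 → b ≠ 0 → (Ideal.span {a} ⊓ Ideal.span {b} : Ideal D).IsPrincipal)
    (V : ∀ P, MaxC c P → ∀ a b : D, ∃ t, t ∉ P ∧ (a ∣ b * t ∨ b ∣ a * t))
    (F : ∀ x : D, x ≠ 0 → ¬ IsUnit x → {P : Ideal D | MaxC c P ∧ x ∈ P}.Finite)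
    (N : ∀ P Q : Ideal D, MaxC c P → MaxC c Q → P ≠ Q →
      ∀ L : Ideal D, L.IsPrime → L ≠ ⊥ → ¬(L ≤ P ⊓ Q))
    (x : D) (hx : x ≠ 0) (hu : ¬ IsUnit x) : ∃ T : Multiset (Ideal D), (∀ J ∈ T, FH c J) ∧
      c T.prod = Ideal.span {x} := by
  have hB : Bez c := by
    intro a b
    by_cases ha : a = 0
    · refine ⟨b, ?_⟩
      subst ha
      have : (Ideal.span {0, b} : Ideal D) = Ideal.span {b} := by
        rw [Ideal.span_insert]; simp
      rw [this, h.single]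
    by_cases hb : b = 0
    · refine ⟨a, ?_⟩
      subst hb
      have : (Ideal.span {a, 0} : Ideal D) = Ideal.span {a} := by
        rw [Ideal.span_insert]; simp
      rw [this, h.single]
    obtain ⟨d, v, u, rfl, rfl, h1, h2⟩ := gcd_red G a b ha hb
    refine ⟨d, h.unred ?_⟩
    by_contra hne
    have hv0 : v ≠ 0 := right_ne_zero_of_mul ha
    obtain ⟨P, hP, hle⟩ := h.exists_max (I := Ideal.span {v, u}) (by
      intro h0
      have : v ∈ Ideal.span {v, u} := Ideal.subset_span (by simp)
      rw [h0] at this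
      exact hv0 this) hne
    obtain ⟨t, ht, hdv | hdv⟩ := V P hP v u
    · exact ht (P.mem_of_dvd (h1 t hdv) (hle (Ideal.subset_span (by simp))))
    · exact ht (P.mem_of_dvd (h2 t hdv) (hle (Ideal.subset_span (by simp))))
  have exm : ∀ y : D, y ≠ 0 → ¬ IsUnit y → ∃ P, MaxC c P ∧ y ∈ P := by
    intro y hy hyu
    obtain ⟨P, hP, hle⟩ := h.exists_max (I := Ideal.span {y}) (by simpa using hy)
      (by rw [h.single]; simpa [Ideal.span_singleton_eq_top] using hyu)
    exact ⟨P, hP, hle (Ideal.mem_span_singleton_self y)⟩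
  -- elements with a unique maximal ideal are homogeneous
  have hom : ∀ y : D, y ≠ 0 → ¬ IsUnit y → (∀ P Q, MaxC c P → MaxC c Q → y ∈ P → y ∈ Q → P = Q) →
      FH c (Ideal.span {y}) := by
    intro y hy hyu huniq
    refine ⟨by simpa [Ideal.span_singleton_eq_top] using hyu, by simpa using hy,
      ⟨_, ⟨{y}, by simp⟩, by simpa using hy, h.single y⟩, ?_, ?_⟩
    · intro J J' hJ hJ' cJ cJ' hyJ hyJ' ht
      have aux : ∀ J, J ≠ ⊤ → CFT c J → Ideal.span {y} ≤ J → ∃ P, MaxC c P ∧ J ≤ P ∧ y ∈ P := by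
        rintro J hJ ⟨I, -, hI0, rfl⟩ hyJ
        obtain ⟨P, hP, hle⟩ := h.exists_max hI0 hJ
        have := h.le_of hP.2.2.1 hle
        exact ⟨P, hP, this, this (hyJ (Ideal.mem_span_singleton_self y))⟩
      obtain ⟨P, hP, hJP, hyP⟩ := aux J hJ cJ hyJ
      obtain ⟨Q, hQ, hJQ, hyQ⟩ := aux J' hJ' cJ' hyJ'
      obtain rfl := huniq P Q hP hQ hyP hyQ
      apply hP.1
      rw [← top_le_iff, ← ht]
      exact h.le_of hP.2.2.1 (sup_le hJP hJQ)
    · rintro J ⟨I, hI, -, rfl⟩ -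
      obtain ⟨d, hd⟩ := h.bez_fg hB hI
      exact ⟨d, hd⟩
  suffices hmain : ∀ n : ℕ, ∀ x : D, x ≠ 0 → ¬ IsUnit x →
      {P : Ideal D | MaxC c P ∧ x ∈ P}.ncard = n →
      ∃ T : Multiset (Ideal D), (∀ J ∈ T, FH c J) ∧ T.prod = Ideal.span {x} by
    obtain ⟨T, hT, hp⟩ := hmain _ x hx hu rfl
    exact ⟨T, hT, by rw [hp, h.single]⟩
  intro n
  induction n using Nat.strong_induction_on with
  | _ n ih =>
  intro x hx hu hn
  by_cases huniq : ∀ P Q, MaxC c P → MaxC c Q → x ∈ P → x ∈ Q → P = Q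
  · refine ⟨{Ideal.span {x}}, ?_, by simp⟩
    intro J hJ
    rw [Multiset.mem_singleton.1 hJ]
    exact hom x hx hu huniq
  push Not at huniq
  obtain ⟨P, Q, hP, hQ, hxP, hxQ, hne⟩ := huniq
  have pP := h.max_prime hP
  have pQ := h.max_prime hQ
  -- x divides a product s * t
  have hst : ∃ s t, s ∉ P ∧ t ∉ Q ∧ x ∣ s * t := by
    by_contra hno
    push Not at hno
    obtain ⟨L, hL, hxL, hdis⟩ := Ideal.exists_le_prime_disjoint (Ideal.span {x})
      (P.primeCompl ⊔ Q.primeCompl) (by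
        rw [Set.disjoint_left]
        intro z hz hz'
        obtain ⟨s, hs, t, ht, rfl⟩ := Submonoid.mem_sup.1 hz'
        exact hno s t hs ht (Ideal.mem_span_singleton.1 hz))
    refine N P Q hP hQ hne L hL ?_ (le_inf ?_ ?_)
    · rintro rfl
      exact hx (hxL (Ideal.mem_span_singleton_self x))
    · intro z hz
      by_contra hzP
      exact Set.disjoint_left.1 hdis hz (le_sup_left (a := P.primeCompl) (b := Q.primeCompl) hzP)
    · intro z hz
      by_contra hzP
      exact Set.disjoint_left.1 hdis hz (le_sup_right (a := P.primeCompl) (b := Q.primeCompl) hzP)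
  obtain ⟨s, t, hs, ht, hxst⟩ := hst
  have hs0 : s ≠ 0 := by rintro rfl; exact hs P.zero_mem
  obtain ⟨d, v, u, rfl, rfl, h1, -⟩ := gcd_red G x s hx hs0
  have hd0 : d ≠ 0 := left_ne_zero_of_mul hx
  have hv0 : v ≠ 0 := right_ne_zero_of_mul hx
  have hvt : v ∣ t := h1 t (by rw [mul_assoc] at hxst; exact (mul_dvd_mul_iff_left hd0).1 hxst)
  have hvQ : v ∉ Q := fun hv => ht (Q.mem_of_dvd hvt hv)
  have hdP : d ∉ P := fun hd => hs (P.mul_mem_right _ hd)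
  have hvP : v ∈ P := (pP.mem_or_mem hxP).resolve_left hdP
  have hdQ : d ∈ Q := (pQ.mem_or_mem hxQ).resolve_right hvQ
  have hdu : ¬ IsUnit d := fun hh => hQ.1 (Ideal.eq_top_of_isUnit_mem _ hdQ hh)
  have hvu : ¬ IsUnit v := fun hh => hP.1 (Ideal.eq_top_of_isUnit_mem _ hvP hh)
  have fin := F (d * v) hx hu
  have l1 : {R : Ideal D | MaxC c R ∧ d ∈ R}.ncard < n := by
    rw [← hn]
    refine Set.ncard_lt_ncard ⟨fun R hR => ⟨hR.1, R.mul_mem_right _ hR.2⟩, fun hsub => ?_⟩ fin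
    exact hdP (hsub ⟨hP, hxP⟩).2
  have l2 : {R : Ideal D | MaxC c R ∧ v ∈ R}.ncard < n := by
    rw [← hn]
    refine Set.ncard_lt_ncard ⟨fun R hR => ⟨hR.1, R.mul_mem_left _ hR.2⟩, fun hsub => ?_⟩ fin
    exact hvQ (hsub ⟨hQ, hxQ⟩).2
  obtain ⟨T₁, hT₁, p₁⟩ := ih _ l1 d hd0 hdu rfl
  obtain ⟨T₂, hT₂, p₂⟩ := ih _ l2 v hv0 hvu rfl
  refine ⟨T₁ + T₂, ?_, ?_⟩
  · intro J hJ
    rcases Multiset.mem_add.1 hJ with hJ | hJ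
    · exact hT₁ J hJ
    · exact hT₂ J hJ
  · rw [Multiset.prod_add, p₁, p₂, Ideal.span_singleton_mul_span_singleton]

end

end FSHAux

namespace FSHAux

variable {D K : Type*} [CommRing D] [IsDomain D] [Field K] [Algebra D K] [IsFractionRing D K]
variable (s : StarOperation D K)

open Classical in
/-- The star operation restricted to integral ideals. -/
noncomputable def cl (I : Ideal D) : Ideal D :=
  if I = ⊥ then ⊥ else
    (s.star (I : FractionalIdeal D⁰ K) : Submodule D K).comap (Algebra.linearMap D K)

theorem cl_bot : cl s ⊥ = ⊥ := by simp [cl]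

theorem mem_cl {I : Ideal D} (hI : I ≠ ⊥) (x : D) :
    x ∈ cl s I ↔ algebraMap D K x ∈ s.star (I : FractionalIdeal D⁰ K) := by
  simp [cl, hI]

theorem star_one : s.star 1 = 1 := by
  have := s.star_spanSingleton 1 one_ne_zero
  rwa [FractionalIdeal.spanSingleton_one] at this

theorem coe_ne {I : Ideal D} (hI : I ≠ ⊥) : (I : FractionalIdeal D⁰ K) ≠ 0 :=
  FractionalIdeal.coeIdeal_ne_zero.2 hI

theorem coe_cl {I : Ideal D} (hI : I ≠ ⊥) :
    (cl s I : FractionalIdeal D⁰ K) = s.star (I : FractionalIdeal D⁰ K) := by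
  ext x
  rw [FractionalIdeal.mem_coeIdeal]
  constructor
  · rintro ⟨y, hy, rfl⟩
    exact (mem_cl s hI y).1 hy
  · intro hx
    have h1 := s.star_mono _ _ (coe_ne hI) one_ne_zero
      (FractionalIdeal.coeIdeal_le_one (S := D⁰) (P := K) (I := I))
    rw [star_one] at h1
    obtain ⟨y, rfl⟩ := (FractionalIdeal.mem_one_iff D⁰).1 (h1 hx)
    exact ⟨y, (mem_cl s hI y).2 hx, rfl⟩

theorem star_eq_iff {I J : Ideal D} (hI : I ≠ ⊥) :
    s.star (I : FractionalIdeal D⁰ K) = (J : FractionalIdeal D⁰ K) ↔ cl s I = J := by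
  rw [← coe_cl s hI, FractionalIdeal.coeIdeal_inj]

theorem star_eq_one_iff {I : Ideal D} (hI : I ≠ ⊥) :
    s.star (I : FractionalIdeal D⁰ K) = 1 ↔ cl s I = ⊤ := by
  rw [← coe_cl s hI, FractionalIdeal.coeIdeal_eq_one, Ideal.one_eq_top]

theorem le_cl (I : Ideal D) : I ≤ cl s I := by
  by_cases hI : I = ⊥
  · simp [hI]
  · rw [← FractionalIdeal.coeIdeal_le_coeIdeal K, coe_cl s hI]
    exact s.le_star _ (coe_ne hI)

theorem stAx (hs : s.FiniteCharacter) : StAx (cl s) where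
  le := le_cl s
  mono I J hIJ := by
    by_cases hI : I = ⊥
    · simp [hI, cl_bot]
    have hJ : J ≠ ⊥ := fun hJ => hI (le_bot_iff.1 (hJ ▸ hIJ))
    rw [← FractionalIdeal.coeIdeal_le_coeIdeal K, coe_cl s hI, coe_cl s hJ]
    exact s.star_mono _ _ (coe_ne hI) (coe_ne hJ) ((FractionalIdeal.coeIdeal_le_coeIdeal K).2 hIJ)
  idem I := by
    by_cases hI : I = ⊥
    · simp [hI, cl_bot]
    have hc : cl s I ≠ ⊥ := fun h0 => hI (le_bot_iff.1 (h0 ▸ le_cl s I))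
    rw [← star_eq_iff s hc, coe_cl s hI, s.star_idem _ (coe_ne hI)]
  mul x I := by
    by_cases hI : I = ⊥
    · simp [hI, cl_bot]
    by_cases hx : x = 0
    · simp [hx, cl_bot]
    have hm : Ideal.span {x} * I ≠ ⊥ := by
      rw [← Ideal.zero_eq_bot]
      exact mul_ne_zero (by simpa using hx) hI
    rw [← star_eq_iff s hm, FractionalIdeal.coeIdeal_mul, FractionalIdeal.coeIdeal_mul, coe_cl s hI,
      FractionalIdeal.coeIdeal_span_singleton, s.star_smul _ _ (by simpa using hx) (coe_ne hI)]
  fin I x hx := by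
    by_cases hI : I = ⊥
    · exact ⟨⊥, Submodule.fg_bot, bot_le, by simpa [hI] using hx⟩
    obtain ⟨J, hJ0, hJ, hJI, hxJ⟩ := hs _ (coe_ne hI) _ ((mem_cl s hI x).1 hx)
    obtain ⟨J, rfl⟩ := FractionalIdeal.le_one_iff_exists_coeIdeal.1
      (hJI.trans FractionalIdeal.coeIdeal_le_one)
    have hJb : J ≠ ⊥ := FractionalIdeal.coeIdeal_ne_zero.1 hJ0
    exact ⟨J, (FractionalIdeal.coeIdeal_fg D⁰ (IsFractionRing.injective D K) J).1 hJ,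
      (FractionalIdeal.coeIdeal_le_coeIdeal K).1 hJI, (mem_cl s hJb x).2 hxJ⟩

theorem isStarIdeal_iff (I : Ideal D) : s.IsStarIdeal I ↔ I ≠ ⊥ ∧ cl s I = I :=
  and_congr_right fun hI => star_eq_iff s hI

theorem ft_iff (I : Ideal D) : s.IsFiniteTypeStarIdeal I ↔ CFT (cl s) I := by
  constructor
  · rintro ⟨J, h0, hfg, he⟩
    exact ⟨J, hfg, h0, (star_eq_iff s h0).1 he⟩
  · rintro ⟨J, hfg, h0, he⟩
    exact ⟨J, h0, hfg, (star_eq_iff s h0).2 he⟩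

theorem max_iff (P : Ideal D) : s.IsMaxStarIdeal P ↔ MaxC (cl s) P := by
  constructor
  · rintro ⟨h1, h2, h3⟩
    rw [isStarIdeal_iff] at h2
    refine ⟨h1, h2.1, h2.2, fun J hJ hc hle => h3 J hJ ?_ hle⟩
    exact (isStarIdeal_iff s J).2 ⟨fun h0 => h2.1 (le_bot_iff.1 (h0 ▸ hle)), hc⟩
  · rintro ⟨h1, h2, h3, h4⟩
    exact ⟨h1, (isStarIdeal_iff s P).2 ⟨h2, h3⟩, fun J hJ hc hle =>
      h4 J hJ ((isStarIdeal_iff s J).1 hc).2 hle⟩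

theorem cft_star (hs : s.FiniteCharacter) {I : Ideal D} (hI : CFT (cl s) I) : s.IsStarIdeal I := by
  obtain ⟨J, -, h0, rfl⟩ := hI
  exact (isStarIdeal_iff s _).2 ⟨fun h => h0 (le_bot_iff.1 (h ▸ le_cl s J)), (stAx s hs).idem J⟩

theorem fh_iff (hs : s.FiniteCharacter) (I : Ideal D) : s.IsFHomog I ↔ FH (cl s) I := by
  have sup_ne : ∀ J J' : Ideal D, I ≠ ⊥ → I ≤ J → J ⊔ J' ≠ ⊥ := fun J J' h0 hle h1 =>
    h0 (le_bot_iff.1 (h1 ▸ hle.trans le_sup_left))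
  constructor
  · rintro ⟨⟨h1, h2, h3, h4⟩, h5⟩
    refine ⟨h1, h2.1, (ft_iff s I).1 h3, ?_, ?_⟩
    · intro J J' hJ hJ' cJ cJ' hle hle' ht
      exact h4 J J' hJ hJ' (cft_star s hs cJ) (cft_star s hs cJ') ((ft_iff s _).2 cJ)
        ((ft_iff s _).2 cJ') hle hle' ((star_eq_one_iff s (sup_ne J J' h2.1 hle)).2 ht)
    · intro J cJ hle
      exact h5 J (cft_star s hs cJ) ((ft_iff s _).2 cJ) hle
  · rintro ⟨h1, h2, h3, h4, h5⟩
    refine ⟨⟨h1, cft_star s hs h3, (ft_iff s I).2 h3, ?_⟩, ?_⟩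
    · intro J J' hJ hJ' _ _ cJ cJ' hle hle' ht
      exact h4 J J' hJ hJ' ((ft_iff s _).1 cJ) ((ft_iff s _).1 cJ') hle hle'
        ((star_eq_one_iff s (sup_ne J J' h2 hle)).1 ht)
    · intro J _ cJ hle
      exact h5 J ((ft_iff s _).1 cJ) hle

theorem prod_iff (hs : s.FiniteCharacter) (x : D) (hx : x ≠ 0) (T : Multiset (Ideal D)) :
    ((∀ J ∈ T, s.IsFHomog J) ∧ s.star ((T.prod : Ideal D) : FractionalIdeal D⁰ K) =
          ((Ideal.span {x} : Ideal D) : FractionalIdeal D⁰ K)) ↔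
    ((∀ J ∈ T, FH (cl s) J) ∧ cl s T.prod = Ideal.span {x}) := by
  simp only [fh_iff s hs]
  refine and_congr_right fun hT => star_eq_iff s ?_
  rw [← Ideal.zero_eq_bot]
  exact Multiset.prod_ne_zero fun h0 => (hT _ h0).2.1 rfl

omit s in
theorem val_iff (P : Ideal D) [P.IsPrime] : ValuationRing (Localization.AtPrime P) ↔
    ∀ a b : D, ∃ t, t ∉ P ∧ (a ∣ b * t ∨ b ∣ a * t) := by
  have inj : Function.Injective (algebraMap D (Localization.AtPrime P)) :=
    IsLocalization.injective _ P.primeCompl_le_nonZeroDivisors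
  have key : ∀ a b : D, algebraMap D (Localization.AtPrime P) a ∣ algebraMap D _ b ↔
      ∃ t, t ∉ P ∧ a ∣ b * t := by
    intro a b
    constructor
    · rintro ⟨z, hz⟩
      obtain ⟨⟨r, t⟩, hrt⟩ := IsLocalization.surj P.primeCompl z
      refine ⟨t, t.2, r, inj ?_⟩
      rw [map_mul, map_mul, hz, mul_assoc, hrt]
    · rintro ⟨t, ht, r, hr⟩
      have hu : IsUnit (algebraMap D (Localization.AtPrime P) t) :=
        IsLocalization.map_units (Localization.AtPrime P) (⟨t, ht⟩ : P.primeCompl)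
      rw [← hu.dvd_mul_right, ← map_mul, hr, map_mul]
      exact dvd_mul_right _ _
  rw [ValuationRing.iff_dvd_total]
  constructor
  · rintro ⟨h⟩ a b
    rcases h (algebraMap D _ a) (algebraMap D _ b) with h | h
    · obtain ⟨t, ht, h⟩ := (key _ _).1 h
      exact ⟨t, ht, Or.inl h⟩
    · obtain ⟨t, ht, h⟩ := (key _ _).1 h
      exact ⟨t, ht, Or.inr h⟩
  · intro h
    refine ⟨fun x y => ?_⟩
    obtain ⟨⟨a, t⟩, hat⟩ := IsLocalization.surj P.primeCompl x
    obtain ⟨⟨b, u⟩, hbu⟩ := IsLocalization.surj P.primeCompl y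
    have ht := IsLocalization.map_units (Localization.AtPrime P) t
    have hu := IsLocalization.map_units (Localization.AtPrime P) u
    dsimp only at hat hbu
    rw [← hu.dvd_mul_right, ← ht.mul_right_dvd, hat, hbu,
      ← ht.dvd_mul_right (a := y), ← hu.mul_right_dvd (a := y), hat, hbu, key, key]
    obtain ⟨r, hr, h | h⟩ := h a b
    · exact Or.inl ⟨r, hr, h⟩
    · exact Or.inr ⟨r, hr, h⟩

theorem int_iff :
    (∀ x : K, (∀ P : Ideal D, s.IsMaxStarIdeal P →
      ∃ a t : D, t ∉ P ∧ x * algebraMap D K t = algebraMap D K a) →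
    ∃ d : D, algebraMap D K d = x) ↔
    (∀ a b : D, b ≠ 0 → (∀ P, MaxC (cl s) P → ∃ t, t ∉ P ∧ b ∣ a * t) → b ∣ a) := by
  have inj := IsFractionRing.injective D K
  have key : ∀ a b r t : D, b ≠ 0 →
      (algebraMap D K a / algebraMap D K b * algebraMap D K t = algebraMap D K r ↔
        a * t = b * r) := by
    intro a b r t hb
    have hb' : algebraMap D K b ≠ 0 := by simpa using hb
    rw [div_mul_eq_mul_div, div_eq_iff hb', ← map_mul, ← map_mul, inj.eq_iff, mul_comm r]
  constructor
  · intro h a b hb H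
    obtain ⟨d, hd⟩ := h (algebraMap D K a / algebraMap D K b) fun P hP => by
      obtain ⟨t, ht, r, hr⟩ := H P ((max_iff s P).1 hP)
      exact ⟨r, t, ht, (key a b r t hb).2 hr⟩
    refine ⟨d, ?_⟩
    have := (key a b d 1 hb).1 (by rw [hd, map_one, mul_one])
    rwa [mul_one] at this
  · intro h x H
    obtain ⟨a, b, hb, rfl⟩ := IsFractionRing.div_surjective (A := D) x
    have hb0 := nonZeroDivisors.ne_zero hb
    obtain ⟨d, hd⟩ := h a b hb0 fun P hP => by
      obtain ⟨r, t, ht, hr⟩ := H P ((max_iff s P).2 hP)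
      exact ⟨t, ht, r, (key a b r t hb0).1 hr⟩
    refine ⟨d, ?_⟩
    have := (key a b d 1 hb0).2 (by rw [mul_one, hd])
    rw [← this, map_one, mul_one]

end FSHAux

/-- For every nonzero nonunit `x` of `D`, `xD` is a `*`-product of finitely
many `*`-f-homogeneous ideals iff `D` is a GCD domain and a `*`-IRKT. -/
theorem fSH_iff_GCD_IRKT {D K : Type*} [CommRing D] [IsDomain D] [Field K]
    [Algebra D K] [IsFractionRing D K] (s : StarOperation D K) (hs : s.FiniteCharacter) :
    (∀ x : D, x ≠ 0 → ¬IsUnit x →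
      ∃ T : Multiset (Ideal D), (∀ J ∈ T, s.IsFHomog J) ∧
        s.star ((T.prod : Ideal D) : FractionalIdeal D⁰ K) =
          ((Ideal.span {x} : Ideal D) : FractionalIdeal D⁰ K)) ↔
    ((∀ a b : D, a ≠ 0 → b ≠ 0 →
        (Ideal.span {a} ⊓ Ideal.span {b} : Ideal D).IsPrincipal) ∧
      s.IsIRKT) := by
  have hst := FSHAux.stAx s hs
  constructor
  · intro H
    obtain ⟨h1, h2, h3, h4, h5⟩ := hst.forward fun x hx hu => by
      obtain ⟨T, hT⟩ := H x hx hu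
      exact ⟨T, (FSHAux.prod_iff s hs x hx T).1 hT⟩
    refine ⟨h1, fun P _ hP => ?_, (FSHAux.int_iff s).2 h3, ?_, ?_⟩
    · exact (FSHAux.val_iff P).2 (h2 P ((FSHAux.max_iff s P).1 hP))
    · intro x hx hu
      simp only [FSHAux.max_iff]
      exact h4 x hx hu
    · simp only [FSHAux.max_iff]
      exact h5
  · rintro ⟨G, V, -, F, N⟩ x hx hu
    unfold StarOperation.FiniteStarCharacter at F
    simp only [FSHAux.max_iff] at F N
    obtain ⟨T, hT⟩ := hst.backward G (fun P hP => by
      haveI := hst.max_prime hP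
      exact (FSHAux.val_iff P).1 (V P ((FSHAux.max_iff s P).2 hP))) F N x hx hu
    exact ⟨T, (FSHAux.prod_iff s hs x hx T).2 hT⟩
end
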